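/- arXiv:2201.11426 — 7 statements merged into one kernel-verified Lean document; each statement's English description precedes it below -/
import Mathlib

section
/- Let (T, T̃) be a pair of densely defined operators with common dense domain on a complex Hilbert space H satisfying (T1) and (T2), with minimal domain W₀ and graph space W. A subspace V of W containing W₀ is closed in W (with respect to the graph norm) if and only if V = V^{[⊥][⊥]}, where S^{[⊥]} := {u ∈ W : [u | v] = 0 for all v ∈ S} and [u | v] := ⟨T₁u, v⟩ − ⟨u, T̃₁v⟩. -/
open LinearPMap
open scoped LinearPMap

noncomputable section

variable {H : Type*} [NormedAddCommGroup H] [InnerProductSpace ℂ H] [CompleteSpace H]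

local notation "⟪" x ", " y "⟫" => @inner ℂ _ _ x y

/-- Conditions (T1)–(T2) for a pair of operators with common dense domain. -/
structure IsPreFriedrichsPair (T Tt : H →ₗ.[ℂ] H) : Prop where
  dom_eq : T.domain = Tt.domain
  dense' : Dense (T.domain : Set H)
  t1 : ∀ (φ : T.domain) (ψ : Tt.domain), ⟪T φ, (ψ : H)⟫ = ⟪(φ : H), Tt ψ⟫
  t2 : ∃ c : ℝ, 0 < c ∧ ∀ φ : (T + Tt).domain, ‖(T + Tt) φ‖ ≤ c * ‖(φ : H)‖

/-- A joint pair of abstract Friedrichs operators: (T1)–(T3). -/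
structure IsFriedrichsPair (T Tt : H →ₗ.[ℂ] H) extends IsPreFriedrichsPair T Tt : Prop where
  t3 : ∃ μ₀ : ℝ, 0 < μ₀ ∧ ∀ φ : (T + Tt).domain,
        2 * μ₀ * ‖(φ : H)‖ ^ 2 ≤ (⟪(T + Tt) φ, (φ : H)⟫).re

/-- The `[⊥]`-orthogonal complement, inside the graph space `W = dom T₁ = dom T̃₁`, of a set
`S ⊆ W`, with respect to the boundary form `[u | v] := ⟪T₁ u, v⟫ − ⟪u, T̃₁ v⟫`. -/
def bdryPerp (T₁ Tt₁ : H →ₗ.[ℂ] H) (S : Set H) : Set H :=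
  {x | ∃ hx : x ∈ T₁.domain,
    ∀ (v : T₁.domain) (w : Tt₁.domain), (v : H) = (w : H) → (v : H) ∈ S →
      ⟪T₁ ⟨x, hx⟩, (v : H)⟫ - ⟪x, Tt₁ w⟫ = 0}

theorem exists_bdd_ext (T Tt : H →ₗ.[ℂ] H) (hF : IsPreFriedrichsPair T Tt) :
    ∃ B : H →L[ℂ] H, (∀ (x : H) (h1 : x ∈ T.domain) (h2 : x ∈ Tt.domain),
      B x = T ⟨x, h1⟩ + Tt ⟨x, h2⟩) ∧ ∀ x y, ⟪B x, y⟫ = ⟪x, B y⟫ := by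
  obtain ⟨c, hc, hb⟩ := hF.t2
  have hdom : (T + Tt).domain = T.domain := by
    rw [LinearPMap.add_domain, ← hF.dom_eq, inf_idem]
  let L : (T + Tt).domain →L[ℂ] H := (T + Tt).toFun.mkContinuous c hb
  have hd : DenseRange ((T + Tt).domain.subtypeL) := by
    have : Dense ((T + Tt).domain : Set H) := by rw [hdom]; exact hF.dense'
    exact this.denseRange_val
  have hL : ∀ x : (T + Tt).domain, L.extend (T + Tt).domain.subtypeL x = L x := fun x =>
    ContinuousLinearMap.extend_eq L hd (isUniformEmbedding_subtype_val.isUniformInducing) x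
  have hB : ∀ (x : H) (h1 : x ∈ T.domain) (h2 : x ∈ Tt.domain),
      L.extend (T + Tt).domain.subtypeL x = T ⟨x, h1⟩ + Tt ⟨x, h2⟩ := by
    intro x h1 h2
    exact hL ⟨x, h1, h2⟩
  refine ⟨L.extend (T + Tt).domain.subtypeL, hB, ?_⟩
  intro x y
  refine DenseRange.induction_on₂ (p := fun x y => ⟪L.extend (T + Tt).domain.subtypeL x, y⟫ =
    ⟪x, L.extend (T + Tt).domain.subtypeL y⟫) hd ?_ ?_ x y
  · exact isClosed_eq (by fun_prop) (by fun_prop)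
  · rintro ⟨a, ha1, ha2⟩ ⟨b, hb1, hb2⟩
    change ⟪L.extend (T + Tt).domain.subtypeL a, b⟫ = ⟪a, L.extend (T + Tt).domain.subtypeL b⟫
    rw [hB a ha1 ha2, hB b hb1 hb2, inner_add_left, inner_add_right,
      hF.t1 ⟨a, ha1⟩ ⟨b, hb2⟩]
    have := congrArg (starRingEnd ℂ) (hF.t1 ⟨b, hb1⟩ ⟨a, ha2⟩)
    simp only [inner_conj_symm] at this
    rw [this, add_comm]

theorem adj_aux (T Tt : H →ₗ.[ℂ] H) (hd : Dense (T.domain : Set H))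
    (hdt : Dense (Tt.domain : Set H)) (hdom : T.domain = Tt.domain) (B : H →L[ℂ] H)
    (hB : ∀ (x : H) (h1 : x ∈ T.domain) (h2 : x ∈ Tt.domain), B x = T ⟨x, h1⟩ + Tt ⟨x, h2⟩)
    (hs : ∀ x y, ⟪B x, y⟫ = ⟪x, B y⟫) (x : H) (hx : x ∈ (T†).domain) :
    ∃ hx' : x ∈ (Tt†).domain, (Tt†) ⟨x, hx'⟩ = B x - (T†) ⟨x, hx⟩ := by
  have key : ∀ φ : Tt.domain, ⟪B x - (T†) ⟨x, hx⟩, (φ : H)⟫ = ⟪x, Tt φ⟫ := by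
    rintro ⟨p, hp⟩
    have hp' : p ∈ T.domain := hdom ▸ hp
    have h := T.adjoint_isFormalAdjoint hd ⟨x, hx⟩ ⟨p, hp'⟩
    simp only at h ⊢
    rw [inner_sub_left, h, hs, hB p hp' hp, inner_add_right]
    ring
  exact ⟨mem_adjoint_domain_of_exists _ ⟨_, key⟩, adjoint_apply_eq hdt _ key⟩

/-- Under (T1)–(T2), a subspace `V` of the graph space `W` containing `W₀` is
closed in `W` (with respect to the graph norm, equivalently: the graph of `T₁|_V` is closed)
iff `V = V^{[⊥][⊥]}`. -/
theorem statement3 (T Tt : H →ₗ.[ℂ] H) (hF : IsPreFriedrichsPair T Tt)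
    (V : Submodule ℂ H) (hV₀ : T.closure.domain ≤ V) (hVW : V ≤ (Tt†).domain) :
    IsClosed {p : H × H | p.1 ∈ V ∧ p ∈ (Tt†).graph} ↔
      (V : Set H) = bdryPerp (Tt†) (T†) (bdryPerp (Tt†) (T†) (V : Set H)) := by
  obtain ⟨B, hB, hs⟩ := exists_bdd_ext T Tt hF
  have hd := hF.dense'
  have hdt : Dense (Tt.domain : Set H) := hF.dom_eq ▸ hF.dense'
  have aux := adj_aux T Tt hd hdt hF.dom_eq B hB hs
  have aux' := adj_aux Tt T hdt hd hF.dom_eq.symm B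
    (fun x h1 h2 => by rw [hB x h2 h1, add_comm]) hs
  -- symmetry of the boundary form
  have symm : ∀ (u : (Tt†).domain) (u' : (T†).domain) (v : (Tt†).domain) (v' : (T†).domain),
      (u : H) = u' → (v : H) = v' → ⟪(Tt†) u, (v : H)⟫ - ⟪(u : H), (T†) v'⟫ = 0 →
      ⟪(Tt†) v, (u : H)⟫ - ⟪(v : H), (T†) u'⟫ = 0 := by
    rintro ⟨u, hu⟩ ⟨u', hu'⟩ ⟨v, hv⟩ ⟨v', hv'⟩ h1 h2 h
    simp only at h1 h2
    subst h1 h2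
    obtain ⟨_, e1⟩ := aux' u hu
    obtain ⟨_, e2⟩ := aux' v hv
    simp only at h ⊢
    rw [e2, inner_sub_right] at h
    rw [e1, inner_sub_right]
    have h3 := congrArg (starRingEnd ℂ) h
    simp only [_root_.map_sub, inner_conj_symm, _root_.map_zero] at h3
    rw [hs] at h3
    linear_combination h3
  have hTle : T ≤ Tt† := by
    refine LinearPMap.IsFormalAdjoint.le_adjoint hdt ?_
    intro x y
    have := congrArg (starRingEnd ℂ) (hF.t1 y x)
    simpa only [inner_conj_symm] using this.symm
  have hDV : T.domain ≤ V := (LinearPMap.le_closure T).1.trans hV₀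
  have hclosed : IsClosed ((Tt†).graph : Set (H × H)) := LinearPMap.adjoint_isClosed hdt
  constructor
  · intro hc
    apply Set.Subset.antisymm
    · intro u hu
      refine ⟨hVW hu, ?_⟩
      rintro v w hvw ⟨hx, hv⟩
      obtain ⟨hu', -⟩ := aux' u (hVW hu)
      exact symm v w ⟨u, hVW hu⟩ ⟨u, hu'⟩ hvw rfl
        (hv ⟨u, hVW hu⟩ ⟨u, hu'⟩ rfl hu)
    · rintro u ⟨huW, hu⟩
      let G : Submodule ℂ (WithLp 2 (H × H)) :=
        ((V.comap (LinearMap.fst ℂ H H)) ⊓ (Tt†).graph).comap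
          (WithLp.linearEquiv 2 ℂ (H × H)).toLinearMap
      have hG : IsClosed (G : Set (WithLp 2 (H × H))) :=
        hc.preimage (WithLp.prod_continuous_ofLp 2 H H)
      have : CompleteSpace G := hG.completeSpace_coe
      have hmem : WithLp.toLp 2 (u, (Tt†) ⟨u, huW⟩) ∈ G := by
        rw [← Submodule.orthogonal_orthogonal G, Submodule.mem_orthogonal]
        intro p hp
        rw [Submodule.mem_orthogonal] at hp
        have hp' : ∀ v (hv : v ∈ V), ⟪v, p.fst⟫ + ⟪(Tt†) ⟨v, hVW hv⟩, p.snd⟫ = 0 := by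
          intro v hv
          have := hp (WithLp.toLp 2 (v, (Tt†) ⟨v, hVW hv⟩))
            ⟨hv, (Tt†).mem_graph ⟨v, hVW hv⟩⟩
          simpa [WithLp.prod_inner_apply] using this
        have key : ∀ φ : T.domain, ⟪-p.fst, (φ : H)⟫ = ⟪p.snd, T φ⟫ := by
          intro φ
          have h1 := hp' φ (hDV φ.2)
          have h2 : T φ = (Tt†) ⟨φ, hVW (hDV φ.2)⟩ := hTle.2 rfl
          rw [← h2] at h1
          have h3 := congrArg (starRingEnd ℂ) h1
          simp only [_root_.map_add, inner_conj_symm, _root_.map_zero] at h3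
          rw [inner_neg_left]
          linear_combination -h3
        have hb' : p.snd ∈ (T†).domain := mem_adjoint_domain_of_exists _ ⟨_, key⟩
        have hbv : (T†) ⟨p.snd, hb'⟩ = -p.fst := adjoint_apply_eq hd _ key
        obtain ⟨hb, -⟩ := aux p.snd hb'
        have h := hu ⟨p.snd, hb⟩ ⟨p.snd, hb'⟩ rfl ⟨hb, by
          intro v w hvw hv
          refine symm v w ⟨p.snd, hb⟩ ⟨p.snd, hb'⟩ hvw rfl ?_
          rw [hbv, inner_neg_right]
          have := hp' v hv
          simp only [Subtype.coe_eta] at this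
          linear_combination this⟩
        rw [hbv, inner_neg_right] at h
        have h3 := congrArg (starRingEnd ℂ) h
        simp only [_root_.map_sub, _root_.map_neg, inner_conj_symm, _root_.map_zero] at h3
        rw [WithLp.prod_inner_apply]
        change ⟪p.fst, u⟫ + ⟪p.snd, (Tt†) ⟨u, huW⟩⟫ = 0
        linear_combination h3
      exact hmem.1
  · intro hV
    have : {p : H × H | p.1 ∈ V ∧ p ∈ (Tt†).graph} = ((Tt†).graph : Set (H × H)) ∩
        ⋂ (v : (Tt†).domain) (w : (T†).domain) (_ : (v : H) = w)
          (_ : (v : H) ∈ bdryPerp (Tt†) (T†) (V : Set H)),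
          {p : H × H | ⟪p.2, (v : H)⟫ - ⟪p.1, (T†) w⟫ = 0} := by
      ext ⟨a, b⟩
      simp only [Set.mem_ofPred_eq, Set.mem_inter_iff, Set.mem_iInter, SetLike.mem_coe]
      rw [and_comm]
      refine and_congr_right fun hg => ?_
      have ha : a ∈ (Tt†).domain := LinearPMap.mem_domain_of_mem_graph hg
      have hab : (Tt†) ⟨a, ha⟩ = b := ((Tt†).image_iff ha).2 hg |>.symm
      have hm : a ∈ V ↔ a ∈ bdryPerp (Tt†) (T†) (bdryPerp (Tt†) (T†) (V : Set H)) :=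
        Set.ext_iff.1 hV a
      rw [hm]
      subst hab
      exact ⟨fun ⟨_, h⟩ => h, fun h => ⟨ha, h⟩⟩
    rw [this]
    refine hclosed.inter ?_
    refine isClosed_iInter fun v => isClosed_iInter fun w => isClosed_iInter fun _ =>
      isClosed_iInter fun _ => isClosed_eq (by fun_prop) (by fun_prop)
end
end

section
/- Let (T₀, T̃₀) be a joint pair of closed abstract Friedrichs operators on a complex Hilbert space H. Then: (i) there exists a pair (T₁|_V, T̃₁|_Ṽ) of mutually adjoint bijective realisations relative to (T₀, T̃₀); (ii) if ker T₁ ≠ {0} and ker T̃₁ ≠ {0}, then there exist uncountably many pairs of mutually adjoint bijective realisations relative to (T₀, T̃₀), whereas if ker T₁ = {0} or ker T̃₁ = {0}, then there is exactly one such pair, namely (T₁, T̃₀) when ker T₁ = {0} and (T₀, T̃₁) when ker T̃₁ = {0}. -/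
open LinearPMap
open scoped LinearPMap

noncomputable section

variable {H : Type*} [NormedAddCommGroup H] [InnerProductSpace ℂ H] [CompleteSpace H]

local notation "⟪" x ", " y "⟫" => @inner ℂ _ _ x y

/-- `(T₁|_V, T̃₁|_Ṽ)` is a pair of mutually adjoint bijective realisations relative to the
closed pair `(T₀, T̃₀)`, where `T₁ := T̃₀*`, `T̃₁ := T₀*`: the domains lie between the minimal
domain and the graph space, the two restrictions are mutually adjoint, and both are bijections
onto `H`. -/
def MABPair (T Tt : H →ₗ.[ℂ] H) (V Vt : Submodule ℂ H) : Prop :=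
  T.domain ≤ V ∧ V ≤ (Tt†).domain ∧ Tt.domain ≤ Vt ∧ Vt ≤ (T†).domain ∧
  ((Tt†).domRestrict V)† = (T†).domRestrict Vt ∧
  ((T†).domRestrict Vt)† = (Tt†).domRestrict V ∧
  Function.Bijective (fun x : ((Tt†).domRestrict V).domain => ((Tt†).domRestrict V) x) ∧
  Function.Bijective (fun x : ((T†).domRestrict Vt).domain => ((T†).domRestrict Vt) x)

/-- Bounded below closed operators have closed range and a bounded left inverse. -/
theorem aux_leftInv (T : H →ₗ.[ℂ] H) (hT : T.IsClosed) (m : ℝ) (hm : 0 < m)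
    (hb : ∀ φ : T.domain, m * ‖(φ : H)‖ ≤ ‖T φ‖) :
    IsClosed (LinearMap.range T.toFun : Set H) ∧
      ∃ Q : H →L[ℂ] H, ∀ φ : T.domain, Q (T φ) = φ := by
  have hcl : IsClosed (LinearMap.range T.toFun : Set H) := by
    have hc : CompleteSpace T.graph := IsClosed.completeSpace_coe (hs := hT)
    let f : T.graph →L[ℂ] H := (ContinuousLinearMap.snd ℂ H H).comp T.graph.subtypeL
    have hf : ∀ p : T.graph, ‖p‖ ≤ (max m⁻¹ 1) * ‖f p‖ := by
      rintro ⟨⟨a, b⟩, hp⟩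
      obtain ⟨φ, h1, h2⟩ := (LinearPMap.mem_graph_iff T).1 hp
      simp only at h1 h2
      subst h1 h2
      have hfb : f ⟨((φ : H), T φ), hp⟩ = T φ := rfl
      rw [hfb]
      have h3 : ‖(φ : H)‖ ≤ m⁻¹ * ‖T φ‖ := by
        rw [inv_mul_eq_div, le_div_iff₀ hm, mul_comm]; exact hb φ
      change max ‖(φ : H)‖ ‖T φ‖ ≤ _
      refine max_le (h3.trans ?_) ?_
      · gcongr; exact le_max_left _ _
      · exact le_mul_of_one_le_left (norm_nonneg _) (le_max_right _ _)
    have ha : AntilipschitzWith (Real.toNNReal (max m⁻¹ 1)) f := by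
      refine AddMonoidHomClass.antilipschitz_of_bound f fun p => ?_
      rw [Real.coe_toNNReal _ (le_trans zero_le_one (le_max_right _ _))]
      exact hf p
    have := ha.isClosed_range f.uniformContinuous
    convert this using 1
    ext y
    constructor
    · rintro ⟨φ, rfl⟩
      exact ⟨⟨((φ : H), T φ), T.mem_graph φ⟩, rfl⟩
    · rintro ⟨⟨⟨a, b⟩, hp⟩, rfl⟩
      obtain ⟨φ, h1, h2⟩ := (LinearPMap.mem_graph_iff T).1 hp
      exact ⟨φ, h2⟩
  refine ⟨hcl, ?_⟩
  have hinj : Function.Injective T.toFun := by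
    rw [← LinearMap.ker_eq_bot, LinearMap.ker_eq_bot']
    intro φ hφ
    have h := hb φ
    have h0 : T φ = 0 := hφ
    rw [h0, norm_zero] at h
    have : ‖(φ : H)‖ ≤ 0 := by
      by_contra hh
      push Not at hh
      have := mul_pos hm hh
      linarith
    exact Subtype.ext (norm_le_zero_iff.1 this)
  have hc : CompleteSpace (LinearMap.range T.toFun) := hcl.completeSpace_coe
  let e := LinearEquiv.ofInjective T.toFun hinj
  have hes : ∀ φ : T.domain, e.symm ⟨T φ, φ, rfl⟩ = φ := fun φ => e.symm_apply_apply φ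
  let g : LinearMap.range T.toFun →L[ℂ] H :=
    (T.domain.subtype ∘ₗ e.symm.toLinearMap).mkContinuous m⁻¹ (by
      rintro ⟨_, φ, rfl⟩
      change ‖((e.symm ⟨T φ, φ, rfl⟩ : T.domain) : H)‖ ≤ m⁻¹ * ‖T φ‖
      rw [hes, inv_mul_eq_div, le_div_iff₀ hm, mul_comm]; exact hb φ)
  refine ⟨g.comp (LinearMap.range T.toFun).orthogonalProjection, fun φ => ?_⟩
  have h1 : (LinearMap.range T.toFun).orthogonalProjection (T φ) = ⟨T φ, φ, rfl⟩ :=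
    Submodule.orthogonalProjection_mem_subspace_eq_self
      (⟨T φ, φ, rfl⟩ : LinearMap.range T.toFun)
  rw [ContinuousLinearMap.comp_apply, h1]
  change ((e.symm ⟨T φ, φ, rfl⟩ : T.domain) : H) = φ
  rw [hes]

theorem aux_bddBelow (T Tt : H →ₗ.[ℂ] H) (hF : IsFriedrichsPair T Tt) :
    ∃ m : ℝ, 0 < m ∧ (∀ φ : T.domain, m * ‖(φ : H)‖ ≤ ‖T φ‖) ∧
      (∀ φ : Tt.domain, m * ‖(φ : H)‖ ≤ ‖Tt φ‖) := by
  obtain ⟨m, hm, h3⟩ := hF.t3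
  have key : ∀ (x : H) (h : x ∈ T.domain) (h' : x ∈ Tt.domain),
      m * ‖x‖ ^ 2 ≤ (⟪T ⟨x, h⟩, x⟫).re ∧ m * ‖x‖ ^ 2 ≤ (⟪Tt ⟨x, h'⟩, x⟫).re := by
    intro x h h'
    have h4 := h3 ⟨x, h, h'⟩
    rw [LinearPMap.add_apply, inner_add_left, Complex.add_re] at h4
    change 2 * m * ‖x‖ ^ 2 ≤ (⟪T ⟨x, h⟩, x⟫).re + (⟪Tt ⟨x, h'⟩, x⟫).re at h4
    have h5 : ⟪T ⟨x, h⟩, x⟫ = ⟪x, Tt ⟨x, h'⟩⟫ := hF.t1 ⟨x, h⟩ ⟨x, h'⟩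
    have h6 : (⟪T ⟨x, h⟩, x⟫).re = (⟪Tt ⟨x, h'⟩, x⟫).re := by
      rw [h5, ← inner_conj_symm, Complex.conj_re]
    constructor <;> linarith
  have fin : ∀ x y : H, m * ‖x‖ ^ 2 ≤ (⟪y, x⟫).re → m * ‖x‖ ≤ ‖y‖ := by
    intro x y h
    have h1 : (⟪y, x⟫).re ≤ ‖y‖ * ‖x‖ := (Complex.re_le_norm _).trans (norm_inner_le_norm _ _)
    rcases (norm_nonneg x).eq_or_lt with h0 | h0
    · rw [← h0]; simp
    · refine le_of_mul_le_mul_right ?_ h0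
      nlinarith
  refine ⟨m, hm, fun φ => fin _ _ (key φ φ.2 (hF.dom_eq ▸ φ.2)).1,
    fun φ => fin _ _ (key φ (hF.dom_eq.symm ▸ φ.2) φ.2).2⟩

/-- A bounded inverse of a realisation. -/
def IsRes (T Tt : H →ₗ.[ℂ] H) (R : H →L[ℂ] H) : Prop :=
  (∀ φ : T.domain, R (T φ) = φ) ∧ ∀ ψ : Tt.domain, R.adjoint (Tt ψ) = ψ

theorem IsRes.symm {T Tt : H →ₗ.[ℂ] H} {R : H →L[ℂ] H} (h : IsRes T Tt R) :
    IsRes Tt T R.adjoint :=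
  ⟨h.2, by rw [ContinuousLinearMap.adjoint_adjoint]; exact h.1⟩

theorem aux_exists (T Tt : H →ₗ.[ℂ] H) (hF : IsFriedrichsPair T Tt)
    (hT : T.IsClosed) (hTt : Tt.IsClosed) : ∃ R : H →L[ℂ] H, IsRes T Tt R := by
  obtain ⟨m, hm, hb, hbt⟩ := aux_bddBelow T Tt hF
  obtain ⟨hcl, Q, hQ⟩ := aux_leftInv T hT m hm hb
  obtain ⟨-, Qt, hQt⟩ := aux_leftInv Tt hTt m hm hbt
  have hc : CompleteSpace (LinearMap.range T.toFun) := hcl.completeSpace_coe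
  let P : H →L[ℂ] H := (LinearMap.range T.toFun).starProjection
  have hP : ∀ φ : T.domain, P (T φ) = T φ := fun φ =>
    Submodule.starProjection_eq_self_iff.2 ⟨φ, rfl⟩
  refine ⟨Q.comp P + Qt.adjoint.comp (1 - P), fun φ => by simp [hP, hQ], fun ψ => ?_⟩
  refine ext_inner_right ℂ fun f => ?_
  obtain ⟨φ, hφ⟩ : ∃ φ : T.domain, T φ = P f :=
    Submodule.starProjection_apply_mem (LinearMap.range T.toFun) f
  rw [ContinuousLinearMap.adjoint_inner_left]
  simp only [ContinuousLinearMap.add_apply, ContinuousLinearMap.comp_apply,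
    ContinuousLinearMap.sub_apply, ContinuousLinearMap.one_apply, inner_add_right]
  rw [ContinuousLinearMap.adjoint_inner_right, hQt, ← hφ, hQ, inner_sub_right]
  have := hF.t1 φ ψ
  have h2 : ⟪Tt ψ, (φ : H)⟫ = ⟪(ψ : H), T φ⟫ := by
    rw [← inner_conj_symm, ← this, inner_conj_symm]
  rw [h2]; ring

theorem IsRes.spec {T Tt : H →ₗ.[ℂ] H} {R : H →L[ℂ] H} (h : IsRes T Tt R)
    (hd : Dense (Tt.domain : Set H)) (f : H) :
    ∃ hf : R f ∈ (Tt†).domain, (Tt†) ⟨R f, hf⟩ = f := by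
  have key : ∀ x : Tt.domain, ⟪f, (x : H)⟫ = ⟪R f, Tt x⟫ := fun x => by
    rw [← ContinuousLinearMap.adjoint_inner_right, h.2]
  exact ⟨mem_adjoint_domain_of_exists _ ⟨f, key⟩, adjoint_apply_eq hd _ key⟩

theorem aux_dr (A : H →ₗ.[ℂ] H) (V : Submodule ℂ H) (v : H) (hv : v ∈ V) (hv' : v ∈ A.domain) :
    A.domRestrict V ⟨v, ⟨hv, hv'⟩⟩ = A ⟨v, hv'⟩ :=
  LinearPMap.domRestrict_apply rfl

theorem IsRes.graph {T Tt : H →ₗ.[ℂ] H} {R : H →L[ℂ] H} (h : IsRes T Tt R)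
    (hd : Dense (Tt.domain : Set H)) (p : H × H) :
    p ∈ ((Tt†).domRestrict (LinearMap.range R.toLinearMap)).graph ↔ R p.2 = p.1 := by
  rw [LinearPMap.mem_graph_iff]
  constructor
  · rintro ⟨⟨y, ⟨f, rfl⟩, hy⟩, h1, h2⟩
    obtain ⟨hf, hs⟩ := h.spec hd f
    have h3 := aux_dr (Tt†) (LinearMap.range R.toLinearMap) (R f) ⟨f, rfl⟩ hf
    have h4 : f = p.2 := hs.symm.trans (h3.symm.trans h2)
    rw [← h4]
    exact h1
  · intro hp
    obtain ⟨hf, hs⟩ := h.spec hd p.2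
    refine ⟨⟨R p.2, ⟨p.2, rfl⟩, hf⟩, hp, ?_⟩
    exact (aux_dr (Tt†) (LinearMap.range R.toLinearMap) (R p.2) ⟨p.2, rfl⟩ hf).trans hs

theorem IsRes.adj {T Tt : H →ₗ.[ℂ] H} {R : H →L[ℂ] H} (h : IsRes T Tt R)
    (hd : Dense (T.domain : Set H)) (hdt : Dense (Tt.domain : Set H)) :
    ((Tt†).domRestrict (LinearMap.range R.toLinearMap))† =
      (T†).domRestrict (LinearMap.range R.adjoint.toLinearMap) := by
  apply LinearPMap.eq_of_eq_graph
  have hdV : Dense (((Tt†).domRestrict (LinearMap.range R.toLinearMap)).domain : Set H) := by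
    refine hd.mono fun x hx => ?_
    have h1 : R (T ⟨x, hx⟩) = x := h.1 ⟨x, hx⟩
    obtain ⟨hf, -⟩ := h.spec hdt (T ⟨x, hx⟩)
    rw [h1] at hf
    exact ⟨⟨_, h1⟩, hf⟩
  rw [adjoint_graph_eq_graph_adjoint hdV]
  ext p
  rw [h.symm.graph hd, Submodule.mem_adjoint_iff]
  simp only [h.graph hdt]
  constructor
  · intro hh
    refine ext_inner_left ℂ fun b => ?_
    rw [ContinuousLinearMap.adjoint_inner_right]
    exact (sub_eq_zero.1 (hh _ b rfl)).symm
  · rintro hp a b rfl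
    rw [← hp, ContinuousLinearMap.adjoint_inner_right, sub_self]

theorem IsRes.bij {T Tt : H →ₗ.[ℂ] H} {R : H →L[ℂ] H} (h : IsRes T Tt R)
    (hdt : Dense (Tt.domain : Set H)) :
    Function.Bijective (fun x : ((Tt†).domRestrict (LinearMap.range R.toLinearMap)).domain =>
      ((Tt†).domRestrict (LinearMap.range R.toLinearMap)) x) := by
  constructor
  · intro x y hxy
    have h1 := (h.graph hdt _).1 (LinearPMap.mem_graph _ x)
    have h2 := (h.graph hdt _).1 (LinearPMap.mem_graph _ y)
    simp only at h1 h2 hxy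
    exact Subtype.ext (by rw [← h1, ← h2, hxy])
  · intro f
    obtain ⟨y, -, hy⟩ := (LinearPMap.mem_graph_iff _).1 ((h.graph hdt (R f, f)).2 rfl)
    exact ⟨y, hy⟩

theorem IsRes.mab {T Tt : H →ₗ.[ℂ] H} {R : H →L[ℂ] H} (h : IsRes T Tt R)
    (hd : Dense (T.domain : Set H)) (hdt : Dense (Tt.domain : Set H)) :
    MABPair T Tt (LinearMap.range R.toLinearMap) (LinearMap.range R.adjoint.toLinearMap) := by
  refine ⟨fun x hx => ⟨_, h.1 ⟨x, hx⟩⟩, ?_, fun x hx => ⟨_, h.2 ⟨x, hx⟩⟩, ?_, h.adj hd hdt, ?_,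
    h.bij hdt, h.symm.bij hd⟩
  · rintro _ ⟨f, rfl⟩
    exact (h.spec hdt f).1
  · rintro _ ⟨f, rfl⟩
    exact (h.symm.spec hd f).1
  · have := h.symm.adj hdt hd
    rwa [ContinuousLinearMap.adjoint_adjoint] at this

theorem MABPair.symm {T Tt : H →ₗ.[ℂ] H} {V Vt : Submodule ℂ H} (h : MABPair T Tt V Vt) :
    MABPair Tt T Vt V := by
  obtain ⟨h1, h2, h3, h4, h5, h6, h7, h8⟩ := h
  exact ⟨h3, h4, h1, h2, h6, h5, h8, h7⟩

theorem IsFriedrichsPair.le_adj {T Tt : H →ₗ.[ℂ] H}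
    (ht : ∀ (φ : T.domain) (ψ : Tt.domain), ⟪T φ, (ψ : H)⟫ = ⟪(φ : H), Tt ψ⟫)
    (hd : Dense (T.domain : Set H)) : Tt ≤ T† :=
  LinearPMap.IsFormalAdjoint.le_adjoint hd ht

theorem aux_unique {T Tt : H →ₗ.[ℂ] H} {V Vt : Submodule ℂ H}
    (ht : ∀ (φ : T.domain) (ψ : Tt.domain), ⟪T φ, (ψ : H)⟫ = ⟪(φ : H), Tt ψ⟫)
    (hd : Dense (T.domain : Set H)) (hdt : Dense (Tt.domain : Set H))
    (hcl : IsClosed (LinearMap.range Tt.toFun : Set H))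
    (hk : ∀ x : (Tt†).domain, (Tt†) x = 0 → (x : H) = 0)
    (h : MABPair T Tt V Vt) : V = (Tt†).domain ∧ Vt = Tt.domain := by
  obtain ⟨h1, h2, h3, h4, h5, h6, h7, h8⟩ := h
  constructor
  · refine le_antisymm h2 fun x hx => ?_
    obtain ⟨⟨v, hv, hv'⟩, hvx⟩ := h7.2 ((Tt†) ⟨x, hx⟩)
    have h9 := aux_dr (Tt†) V v hv hv'
    have h10 : (Tt†) ⟨v, hv'⟩ = (Tt†) ⟨x, hx⟩ := h9.symm.trans hvx
    have h11 := hk (⟨v, hv'⟩ - ⟨x, hx⟩) (by rw [LinearPMap.map_sub, h10, sub_self])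
    have h12 : v = x := sub_eq_zero.1 h11
    exact h12 ▸ hv
  · refine le_antisymm (fun x hx => ?_) h3
    have hc : CompleteSpace (LinearMap.range Tt.toFun) := hcl.completeSpace_coe
    have htop : LinearMap.range Tt.toFun = ⊤ := by
      rw [← Submodule.orthogonal_eq_bot_iff, Submodule.eq_bot_iff]
      intro w hw
      have hw' : ∀ x : Tt.domain, ⟪(0 : H), (x : H)⟫ = ⟪w, Tt x⟫ := fun x => by
        rw [inner_zero_left]
        exact ((Submodule.mem_orthogonal' _ _).1 hw _ ⟨x, rfl⟩).symm
      exact hk ⟨w, mem_adjoint_domain_of_exists _ ⟨0, hw'⟩⟩ (adjoint_apply_eq hdt _ hw')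
    have hle := IsFriedrichsPair.le_adj ht hd
    obtain ⟨ψ, hψ⟩ : (T†) ⟨x, h4 hx⟩ ∈ LinearMap.range Tt.toFun := htop ▸ Submodule.mem_top
    have h9 := aux_dr (T†) Vt x hx (h4 hx)
    have h10 := aux_dr (T†) Vt ψ (h3 ψ.2) (hle.1 ψ.2)
    have h11 : Tt ψ = (T†) ⟨ψ, hle.1 ψ.2⟩ := hle.2 rfl
    have h12 := h8.1 (a₁ := ⟨x, hx, h4 hx⟩) (a₂ := ⟨ψ, h3 ψ.2, hle.1 ψ.2⟩)
      (h9.trans (hψ.symm.trans (h11.trans h10.symm)))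
    have h13 : x = ψ := congrArg Subtype.val h12
    exact h13 ▸ ψ.2

/-- For a joint pair `(T₀, T̃₀)` of closed abstract Friedrichs operators:
(i) there exists a pair of mutually adjoint bijective realisations; (ii) if both kernels
`ker T₁`, `ker T̃₁` are nontrivial there are uncountably many such pairs, while if `ker T₁ = 0`
(resp. `ker T̃₁ = 0`) there is exactly one, namely `(T₁, T̃₀)` (resp. `(T₀, T̃₁)`). -/
theorem statement5 (T Tt : H →ₗ.[ℂ] H) (hF : IsFriedrichsPair T Tt)
    (hT : T.IsClosed) (hTt : Tt.IsClosed) :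
    (∃ V Vt : Submodule ℂ H, MABPair T Tt V Vt) ∧
    (((∃ x : (Tt†).domain, (Tt†) x = 0 ∧ (x : H) ≠ 0) ∧
      (∃ y : (T†).domain, (T†) y = 0 ∧ (y : H) ≠ 0)) →
        ¬ Set.Countable {p : Submodule ℂ H × Submodule ℂ H | MABPair T Tt p.1 p.2}) ∧
    ((∀ x : (Tt†).domain, (Tt†) x = 0 → (x : H) = 0) →
      (MABPair T Tt (Tt†).domain Tt.domain ∧
        ∀ V Vt : Submodule ℂ H, MABPair T Tt V Vt → V = (Tt†).domain ∧ Vt = Tt.domain)) ∧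
    ((∀ y : (T†).domain, (T†) y = 0 → (y : H) = 0) →
      (MABPair T Tt T.domain (T†).domain ∧
        ∀ V Vt : Submodule ℂ H, MABPair T Tt V Vt → V = T.domain ∧ Vt = (T†).domain)) := by
  have hd := hF.dense'
  have hdt : Dense (Tt.domain : Set H) := hF.dom_eq ▸ hF.dense'
  obtain ⟨R, hR⟩ := aux_exists T Tt hF hT hTt
  obtain ⟨m, hm, hb, hbt⟩ := aux_bddBelow T Tt hF
  have hcl := (aux_leftInv T hT m hm hb).1
  have hclt := (aux_leftInv Tt hTt m hm hbt).1
  have hmab := hR.mab hd hdt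
  have ht' : ∀ (φ : Tt.domain) (ψ : T.domain), ⟪Tt φ, (ψ : H)⟫ = ⟪(φ : H), T ψ⟫ := fun φ ψ => by
    rw [← inner_conj_symm, ← hF.t1, inner_conj_symm]
  refine ⟨⟨_, _, hmab⟩, ?_, fun hk => ?_, fun hk => ?_⟩
  · rintro ⟨⟨x, hx, hx0⟩, ⟨y, hy, hy0⟩⟩ hcount
    let N : ℂ → H →L[ℂ] H := fun c => c • (InnerProductSpace.rankOne ℂ (x : H) (y : H))
    have hN : ∀ c, IsRes T Tt (R + N c) := by
      intro c
      constructor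
      · intro φ
        have h1 : ⟪(y : H), T φ⟫ = 0 := by
          rw [← adjoint_isFormalAdjoint hd y φ, hy, inner_zero_left]
        simp [N, hR.1, h1]
      · intro ψ
        have h1 : ⟪(x : H), Tt ψ⟫ = 0 := by
          rw [← adjoint_isFormalAdjoint hdt x ψ, hx, inner_zero_left]
        refine ext_inner_right ℂ fun f => ?_
        have h2 : ⟪Tt ψ, (x : H)⟫ = 0 := by rw [← inner_conj_symm, h1, _root_.map_zero]
        rw [ContinuousLinearMap.adjoint_inner_left, ContinuousLinearMap.add_apply, inner_add_right,
          ← ContinuousLinearMap.adjoint_inner_left, hR.2]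
        simp [N, inner_smul_right, h2]
    let F : ℂ → Submodule ℂ H × Submodule ℂ H := fun c =>
      (LinearMap.range (R + N c).toLinearMap, LinearMap.range (R + N c).adjoint.toLinearMap)
    have hFinj : Function.Injective F := by
      intro c d hcd
      have h1 : LinearMap.range (R + N c).toLinearMap = LinearMap.range (R + N d).toLinearMap :=
        congrArg Prod.fst hcd
      have h2 : (R + N c) (y : H) ∈ LinearMap.range (R + N d).toLinearMap := h1 ▸ ⟨_, rfl⟩
      obtain ⟨g, hg⟩ := h2
      have hg' : (R + N d) g = (R + N c) y := hg
      obtain ⟨k1, k2⟩ := (hN c).spec hdt y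
      obtain ⟨k3, k4⟩ := (hN d).spec hdt g
      have h3 : g = y := by
        rw [← k4, ← k2]
        congr 1
        exact Subtype.ext hg'
      rw [h3] at hg'
      simp only [ContinuousLinearMap.add_apply, add_right_inj] at hg'
      simp only [N, ContinuousLinearMap.smul_apply, InnerProductSpace.rankOne_apply] at hg'
      have h5 : ⟪(y : H), (y : H)⟫ • (x : H) ≠ 0 := smul_ne_zero (inner_self_ne_zero.2 hy0) hx0
      exact (smul_left_injective ℂ h5 hg').symm
    have h6 : (Set.univ : Set ℂ).Countable := by
      have := hcount.preimage_of_injOn (f := F) hFinj.injOn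
      exact this.mono fun c _ => (hN c).mab hd hdt
    exact not_countable_complex h6
  · have hu := fun V Vt => aux_unique (V := V) (Vt := Vt) hF.t1 hd hdt hclt hk
    obtain ⟨e1, e2⟩ := hu _ _ hmab
    rw [e1, e2] at hmab
    exact ⟨hmab, hu⟩
  · have hu := fun V Vt (h : MABPair T Tt V Vt) => (aux_unique ht' hdt hd hcl hk h.symm).symm
    obtain ⟨e1, e2⟩ := hu _ _ hmab
    rw [e1, e2] at hmab
    exact ⟨hmab, hu⟩
end
end

section
/- Let (T₀, T̃₀) be a joint pair of closed abstract Friedrichs operators on a complex Hilbert space H. Then T₀ and T̃₀ are injective with closed ranges, and H admits the orthogonal decompositions H = ran T₀ ⊕ ker T̃₁ and H = ran T̃₀ ⊕ ker T₁. -/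
open LinearPMap
open scoped LinearPMap

noncomputable section

variable {H : Type*} [NormedAddCommGroup H] [InnerProductSpace ℂ H] [CompleteSpace H]

local notation "⟪" x ", " y "⟫" => @inner ℂ _ _ x y

/-- The kernel of a partially defined operator, as a submodule of the ambient space. -/
def pKer (f : H →ₗ.[ℂ] H) : Submodule ℂ H :=
  (LinearMap.ker f.toFun).map f.domain.subtype

theorem aux_main (S : H →ₗ.[ℂ] H) (hd : Dense (S.domain : Set H)) (hS : S.IsClosed)
    (m : ℝ) (hm : 0 < m) (hb : ∀ x : S.domain, m * ‖(x : H)‖ ≤ ‖S x‖) :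
    Function.Injective (fun x : S.domain => S x) ∧
    IsClosed (Set.range (fun x : S.domain => S x)) ∧
    (pKer (S†) = (LinearMap.range S.toFun)ᗮ ∧
      IsCompl (LinearMap.range S.toFun) (pKer (S†))) := by
  have hinj : Function.Injective (fun x : S.domain => S x) := by
    intro x y hxy
    have h1 : S (x - y) = 0 := by
      rw [LinearPMap.map_sub]; exact sub_eq_zero.2 hxy
    have h2 := hb (x - y)
    rw [h1, norm_zero] at h2
    have h3 : ‖((x - y : S.domain) : H)‖ ≤ 0 := by
      by_contra h
      push Not at h
      nlinarith [mul_pos hm h]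
    have h4 : ((x - y : S.domain) : H) = 0 := norm_le_zero_iff.1 h3
    exact sub_eq_zero.1 (Subtype.ext h4)
  have hcl : IsClosed (Set.range (fun x : S.domain => S x)) := by
    have hc : CompleteSpace S.graph := IsClosed.completeSpace_coe (hs := hS)
    let f : S.graph →L[ℂ] H := (ContinuousLinearMap.snd ℂ H H).comp S.graph.subtypeL
    have hf : AntilipschitzWith (Real.toNNReal (max m⁻¹ 1)) f := by
      apply AddMonoidHomClass.antilipschitz_of_bound
      rintro ⟨⟨a, b⟩, hp⟩
      rw [LinearPMap.mem_graph_iff] at hp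
      obtain ⟨x, hx, hy⟩ := hp
      simp only at hx hy
      subst hx hy
      have e : f ⟨((x : H), S x), by simp⟩ = S x := rfl
      rw [Real.coe_toNNReal _ (le_trans zero_le_one (le_max_right _ _))]
      change max ‖(x : H)‖ ‖S x‖ ≤ max m⁻¹ 1 * ‖S x‖
      apply max_le
      · calc ‖(x : H)‖ = m⁻¹ * (m * ‖(x : H)‖) := by field_simp
          _ ≤ m⁻¹ * ‖S x‖ := by gcongr; exact hb x
          _ ≤ _ := by gcongr; exact le_max_left _ _
      · calc ‖S x‖ = 1 * ‖S x‖ := (one_mul _).symm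
          _ ≤ _ := by gcongr; exact le_max_right _ _
    have h := hf.isClosed_range f.uniformContinuous
    convert h using 1
    ext y
    constructor
    · rintro ⟨x, rfl⟩
      exact ⟨⟨((x : H), S x), S.mem_graph x⟩, rfl⟩
    · rintro ⟨⟨⟨a, b⟩, hp⟩, rfl⟩
      rw [LinearPMap.mem_graph_iff] at hp
      obtain ⟨x, hx, hy⟩ := hp
      exact ⟨x, hy⟩
  have hk : pKer (S†) = (LinearMap.range S.toFun)ᗮ := by
    ext y
    rw [Submodule.mem_orthogonal']
    constructor
    · rintro ⟨z, hz, rfl⟩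
      rintro _ ⟨x, rfl⟩
      have h := LinearPMap.adjoint_isFormalAdjoint hd z x
      have hz' : S† z = 0 := hz
      rw [hz', inner_zero_left] at h
      exact h.symm
    · intro h
      have h0 : ∀ x : S.domain, inner ℂ (0 : H) (x : H) = inner ℂ y (S x) := fun x => by
        rw [inner_zero_left]; exact (h _ ⟨x, rfl⟩).symm
      have hy : y ∈ S†.domain := LinearPMap.mem_adjoint_domain_of_exists y ⟨0, h0⟩
      exact ⟨⟨y, hy⟩, LinearPMap.adjoint_apply_eq hd ⟨y, hy⟩ h0, rfl⟩
  refine ⟨hinj, hcl, hk, ?_⟩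
  rw [hk]
  have hc : CompleteSpace (LinearMap.range S.toFun) :=
    IsClosed.completeSpace_coe (hs := hcl)
  exact Submodule.isCompl_orthogonal _

theorem aux_bound {m a b : ℝ} (ha : 0 ≤ a) (hb : 0 ≤ b) (h : m * a ^ 2 ≤ b * a) :
    m * a ≤ b := by
  rcases ha.eq_or_lt with h0 | h0
  · subst h0; simpa using hb
  · by_contra hc
    push Not at hc
    nlinarith [mul_lt_mul_of_pos_right hc h0]

theorem aux_friedrichs (T Tt : H →ₗ.[ℂ] H) (hF : IsFriedrichsPair T Tt) :
    ∃ m : ℝ, 0 < m ∧ (∀ x : T.domain, m * ‖(x : H)‖ ≤ ‖T x‖) ∧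
      (∀ x : Tt.domain, m * ‖(x : H)‖ ≤ ‖Tt x‖) := by
  obtain ⟨m, hm, h3⟩ := hF.t3
  have key : ∀ (x : H) (h1 : x ∈ T.domain) (h2 : x ∈ Tt.domain),
      m * ‖x‖ ≤ ‖T ⟨x, h1⟩‖ ∧ m * ‖x‖ ≤ ‖Tt ⟨x, h2⟩‖ := by
    intro x h1 h2
    have h := h3 ⟨x, h1, h2⟩
    have e : (T + Tt) ⟨x, h1, h2⟩ = T ⟨x, h1⟩ + Tt ⟨x, h2⟩ := rfl
    rw [e, inner_add_left, Complex.add_re] at h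
    have t := congrArg Complex.re (hF.t1 ⟨x, h1⟩ ⟨x, h2⟩)
    have s : (inner ℂ x (Tt ⟨x, h2⟩)).re = (inner ℂ (Tt ⟨x, h2⟩) x).re :=
      inner_re_symm (𝕜 := ℂ) _ _
    simp only at t h
    have b1 : (inner ℂ (T ⟨x, h1⟩) x).re ≤ ‖T ⟨x, h1⟩‖ * ‖x‖ := re_inner_le_norm (𝕜 := ℂ) _ _
    have b2 : (inner ℂ (Tt ⟨x, h2⟩) x).re ≤ ‖Tt ⟨x, h2⟩‖ * ‖x‖ := re_inner_le_norm (𝕜 := ℂ) _ _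
    constructor
    · apply aux_bound (norm_nonneg _) (norm_nonneg _); linarith
    · apply aux_bound (norm_nonneg _) (norm_nonneg _); linarith
  exact ⟨m, hm, fun x => (key x x.2 (hF.dom_eq.le x.2)).1,
    fun x => (key x (hF.dom_eq.ge x.2) x.2).2⟩

/-- For a joint pair `(T₀, T̃₀)` of closed abstract Friedrichs operators:
`T₀` and `T̃₀` are injective with closed ranges, and `H` admits the orthogonal decompositions
`H = ran T₀ ⊕ ker T̃₁` and `H = ran T̃₀ ⊕ ker T₁` (with `T₁ := T̃₀*`, `T̃₁ := T₀*`). -/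
theorem statement8 (T Tt : H →ₗ.[ℂ] H) (hF : IsFriedrichsPair T Tt)
    (hT : T.IsClosed) (hTt : Tt.IsClosed) :
    Function.Injective (fun x : T.domain => T x) ∧
    Function.Injective (fun x : Tt.domain => Tt x) ∧
    IsClosed (Set.range (fun x : T.domain => T x)) ∧
    IsClosed (Set.range (fun x : Tt.domain => Tt x)) ∧
    (pKer (T†) = (LinearMap.range T.toFun)ᗮ ∧
      IsCompl (LinearMap.range T.toFun) (pKer (T†))) ∧
    (pKer (Tt†) = (LinearMap.range Tt.toFun)ᗮ ∧
      IsCompl (LinearMap.range Tt.toFun) (pKer (Tt†))) := by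
  obtain ⟨m, hm, h1, h2⟩ := aux_friedrichs T Tt hF
  obtain ⟨a1, a2, a3⟩ := aux_main T hF.dense' hT m hm h1
  obtain ⟨b1, b2, b3⟩ := aux_main Tt (hF.dom_eq ▸ hF.dense') hTt m hm h2
  exact ⟨a1, b1, a2, b2, a3, b3⟩
end
end

section
/- Let (T₀, T̃₀) be a joint pair of closed abstract Friedrichs operators on a complex Hilbert space H, with minimal domain W₀ and graph space W. Then the graph space decomposes as the direct sum W = W₀ ∔ ker T₁ ∔ ker T̃₁ (i.e. W₀ + ker T₁ + ker T̃₁ = W and the sum is direct). -/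
open LinearPMap
open scoped LinearPMap

noncomputable section

variable {H : Type*} [NormedAddCommGroup H] [InnerProductSpace ℂ H] [CompleteSpace H]

local notation "⟪" x ", " y "⟫" => @inner ℂ _ _ x y

lemma mem_pKer_adjoint (T : H →ₗ.[ℂ] H) (hd : Dense (T.domain : Set H)) (x : H) :
    x ∈ pKer (T†) ↔ ∀ φ : T.domain, ⟪x, T φ⟫ = 0 := by
  unfold pKer
  constructor
  · rintro ⟨y, hy, rfl⟩ φ
    have h := adjoint_isFormalAdjoint hd y φ
    have h0 : T† y = 0 := hy
    rw [h0, inner_zero_left] at h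
    exact h.symm
  · intro h
    have hx : x ∈ T†.domain := mem_adjoint_domain_of_exists x ⟨0, fun φ => by simp [h φ]⟩
    refine ⟨⟨x, hx⟩, ?_, rfl⟩
    exact adjoint_apply_eq hd ⟨x, hx⟩ (fun φ => by simp [h φ])

lemma exists_bounded_sum (T Tt : H →ₗ.[ℂ] H) (hF : IsFriedrichsPair T Tt) :
    ∃ S : H →L[ℂ] H, (∀ x (hx : x ∈ T.domain) (hx' : x ∈ Tt.domain),
      S x = T ⟨x, hx⟩ + Tt ⟨x, hx'⟩) ∧ (∀ x y, ⟪S x, y⟫ = ⟪x, S y⟫) ∧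
      ∃ μ : ℝ, 0 < μ ∧ ∀ x, 2 * μ * ‖x‖ ^ 2 ≤ (⟪S x, x⟫).re := by
  obtain ⟨c, hc, hb⟩ := hF.t2
  obtain ⟨μ, hμ, hm⟩ := hF.t3
  have hdom : (T + Tt).domain = T.domain := by
    rw [LinearPMap.add_domain, ← hF.dom_eq, inf_idem]
  have hd : Dense ((T + Tt).domain : Set H) := by rw [hdom]; exact hF.dense'
  let A : (T + Tt).domain →L[ℂ] H := (T + Tt).toFun.mkContinuous c hb
  let S : H →L[ℂ] H := A.extend (Submodule.subtypeL (T + Tt).domain)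
  have hSA : ∀ x : (T + Tt).domain, S x = (T + Tt) x := fun x =>
    ContinuousLinearMap.extend_eq _ hd.denseRange_val
      isUniformEmbedding_subtype_val.isUniformInducing _
  have hS : ∀ x (hx : x ∈ T.domain) (hx' : x ∈ Tt.domain),
      S x = T ⟨x, hx⟩ + Tt ⟨x, hx'⟩ := fun x hx hx' => hSA ⟨x, hx, hx'⟩
  refine ⟨S, hS, ?_, μ, hμ, ?_⟩
  · intro x y
    have hsy : ∀ x ∈ T.domain, ∀ y ∈ T.domain, ⟪S x, y⟫ = ⟪x, S y⟫ := by
      intro x hx y hy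
      have hx' := hF.dom_eq ▸ hx
      have hy' := hF.dom_eq ▸ hy
      rw [hS x hx hx', hS y hy hy', inner_add_left, inner_add_right]
      have h1 := hF.t1 ⟨x, hx⟩ ⟨y, hy'⟩
      have h2 := LinearPMap.IsFormalAdjoint.symm (T := T) (S := Tt) hF.t1 ⟨x, hx'⟩ ⟨y, hy⟩
      simp only at h1 h2
      rw [h1, h2, add_comm]
    refine hF.dense'.induction (P := fun x => ⟪S x, y⟫ = ⟪x, S y⟫) ?_
      (isClosed_eq (by fun_prop) (by fun_prop)) x
    intro x hx
    refine hF.dense'.induction (P := fun y => ⟪S x, y⟫ = ⟪x, S y⟫) ?_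
      (isClosed_eq (by fun_prop) (by fun_prop)) y
    intro y hy
    exact hsy x hx y hy
  · intro x
    refine hd.induction (P := fun x => 2 * μ * ‖x‖ ^ 2 ≤ (⟪S x, x⟫).re) ?_
      (isClosed_le (by fun_prop) (by fun_prop)) x
    intro x hx
    have := hm ⟨x, hx⟩
    rwa [← hSA] at this

lemma isClosed_range_of_bound (T : H →ₗ.[ℂ] H) (hT : T.IsClosed) (μ : ℝ) (hμ : 0 < μ)
    (h : ∀ φ : T.domain, μ * ‖(φ : H)‖ ≤ ‖T φ‖) :
    IsClosed (LinearMap.range T.toFun : Set H) := by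
  have hc : CompleteSpace T.graph := hT.completeSpace_coe
  let f : T.graph →L[ℂ] H := (ContinuousLinearMap.snd ℂ H H).comp T.graph.subtypeL
  have hanti : AntilipschitzWith (Real.toNNReal (max μ⁻¹ 1)) f := by
    refine ContinuousLinearMap.antilipschitz_of_bound f ?_
    rintro ⟨⟨a, b⟩, hg⟩
    obtain ⟨φ, h1, h2⟩ := T.mem_graph_iff.1 hg
    simp only at h1 h2
    subst h1 h2
    rw [Real.coe_toNNReal _ (le_trans zero_le_one (le_max_right _ _))]
    change max ‖(φ : H)‖ ‖T φ‖ ≤ max μ⁻¹ 1 * ‖T φ‖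
    refine max_le ?_ ?_
    · refine le_trans ?_ (mul_le_mul_of_nonneg_right (le_max_left _ _) (norm_nonneg _))
      rw [inv_mul_eq_div, le_div_iff₀ hμ, mul_comm]
      exact h φ
    · refine le_trans ?_ (mul_le_mul_of_nonneg_right (le_max_right _ _) (norm_nonneg _))
      simp
  have hcl := hanti.isClosed_range f.uniformContinuous
  convert hcl using 1
  ext y
  constructor
  · rintro ⟨φ, rfl⟩
    exact ⟨⟨(φ, T φ), T.mem_graph φ⟩, rfl⟩
  · rintro ⟨⟨⟨a, b⟩, hg⟩, rfl⟩
    obtain ⟨φ, h1, h2⟩ := T.mem_graph_iff.1 hg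
    exact ⟨φ, h2⟩

lemma exists_solve (S : H →L[ℂ] H) (μ : ℝ) (hμ : 0 < μ)
    (hm : ∀ x, 2 * μ * ‖x‖ ^ 2 ≤ (⟪S x, x⟫).re) (N : Submodule ℂ H) [CompleteSpace N] (z : H) :
    ∃ ν ∈ N, z - S ν ∈ Nᗮ := by
  let f : N →L[ℂ] N := N.orthogonalProjectionOnto.comp (S.comp N.subtypeL)
  have hu : IsUnit f := by
    refine ContinuousLinearMap.isUnit_of_forall_le_norm_inner_map f (c := Real.toNNReal (2 * μ))
      (by simpa using hμ) ?_
    intro x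
    rw [Real.coe_toNNReal _ (by positivity)]
    have h1 : inner ℂ (f x) x = ⟪S x, (x : H)⟫ := by
      exact Submodule.inner_orthogonalProjectionOnto_eq_of_mem_right x (S x)
    rw [h1, mul_comm]
    exact (hm x).trans (Complex.re_le_norm _)
  obtain ⟨ν, hν⟩ := (ContinuousLinearMap.isUnit_iff_bijective.1 hu).2 (N.orthogonalProjectionOnto z)
  refine ⟨ν, ν.2, ?_⟩
  rw [← Submodule.orthogonalProjectionOnto_eq_zero_iff, _root_.map_sub, sub_eq_zero]
  exact hν.symm

/-- For a joint pair `(T₀, T̃₀)` of closed abstract Friedrichs operators, the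
graph space decomposes as `W = W₀ ∔ ker T₁ ∔ ker T̃₁` (with `T₁ := T̃₀*`, `T̃₁ := T₀*`,
`W₀ = dom T₀` and `W = dom T₁`): the three subspaces sum to `W` and the sum is direct. -/
theorem statement9 (T Tt : H →ₗ.[ℂ] H) (hF : IsFriedrichsPair T Tt)
    (hT : T.IsClosed) (hTt : Tt.IsClosed) :
    (T.domain ⊔ pKer (Tt†) ⊔ pKer (T†) = (Tt†).domain) ∧
    (∀ u₀ ∈ T.domain, ∀ ν ∈ pKer (Tt†), ∀ ν' ∈ pKer (T†),
      u₀ + ν + ν' = 0 → u₀ = 0 ∧ ν = 0 ∧ ν' = 0) := by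
  obtain ⟨S, hS, hsym, μ, hμ, hm⟩ := exists_bounded_sum T Tt hF
  have hd := hF.dense'
  have hdt : Dense (Tt.domain : Set H) := hF.dom_eq ▸ hF.dense'
  have t1 := hF.t1
  have t1' : ∀ (φ : Tt.domain) (ψ : T.domain), ⟪Tt φ, (ψ : H)⟫ = ⟪(φ : H), T ψ⟫ :=
    LinearPMap.IsFormalAdjoint.symm (T := T) (S := Tt) hF.t1
  have hle : ∀ x, x ∈ T.domain → x ∈ Tt.domain := fun x hx => hF.dom_eq ▸ hx
  have hge : ∀ x, x ∈ Tt.domain → x ∈ T.domain := fun x hx => hF.dom_eq ▸ hx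
  have hzero : ∀ x, ⟪S x, x⟫ = 0 → x = 0 := by
    intro x hx
    have h := hm x
    rw [hx, Complex.zero_re] at h
    have h2 : ‖x‖ ^ 2 ≤ 0 := by
      by_contra hlt
      push Not at hlt
      have : 0 < 2 * μ * ‖x‖ ^ 2 := by positivity
      linarith
    have h3 : ‖x‖ = 0 := by nlinarith [norm_nonneg x]
    exact norm_eq_zero.1 h3
  refine ⟨le_antisymm (sup_le (sup_le ?_ ?_) ?_) ?_, ?_⟩
  · intro x hx
    exact mem_adjoint_domain_of_exists x ⟨T ⟨x, hx⟩, fun ψ => t1 ⟨x, hx⟩ ψ⟩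
  · rintro _ ⟨y, -, rfl⟩
    exact y.2
  · intro x hx
    rw [mem_pKer_adjoint T hd] at hx
    refine mem_adjoint_domain_of_exists x ⟨S x, fun ψ => ?_⟩
    rw [hsym, hS ψ (hge _ ψ.2) ψ.2, inner_add_right, hx, zero_add]
  · intro u hu
    have hz1 : ∀ ψ : Tt.domain, ⟪Tt† ⟨u, hu⟩, (ψ : H)⟫ = ⟪u, Tt ψ⟫ :=
      fun ψ => adjoint_isFormalAdjoint hdt ⟨u, hu⟩ ψ
    have hbd : ∀ φ : Tt.domain, μ * ‖(φ : H)‖ ≤ ‖Tt φ‖ := by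
      intro φ
      have h1 := hm φ
      rw [hS φ (hge _ φ.2) φ.2, inner_add_left, t1 ⟨φ, hge _ φ.2⟩ φ, Complex.add_re] at h1
      have h2 : (⟪(φ : H), Tt φ⟫).re ≤ ‖(φ : H)‖ * ‖Tt φ‖ :=
        (Complex.re_le_norm _).trans (norm_inner_le_norm _ _)
      have h3 : (⟪Tt φ, (φ : H)⟫).re ≤ ‖Tt φ‖ * ‖(φ : H)‖ :=
        (Complex.re_le_norm _).trans (norm_inner_le_norm _ _)
      rcases (norm_nonneg (φ : H)).eq_or_lt with h0 | h0
      · rw [← h0]; simp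
      · refine le_of_mul_le_mul_right ?_ h0
        simp only at h1
        nlinarith
    have hcl := isClosed_range_of_bound Tt hTt μ hμ hbd
    set R : Submodule ℂ H := LinearMap.range Tt.toFun with hR
    have : CompleteSpace R := hcl.completeSpace_coe
    obtain ⟨ν, hν, hz⟩ := exists_solve S μ hμ hm Rᗮ (S u - Tt† ⟨u, hu⟩)
    rw [Submodule.orthogonal_orthogonal] at hz
    obtain ⟨φ, hφ⟩ := hz
    have hφ' : Tt φ = S u - Tt† ⟨u, hu⟩ - S ν := hφ
    have hν' : ∀ ψ : Tt.domain, ⟪ν, Tt ψ⟫ = 0 := fun ψ =>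
      (Submodule.mem_orthogonal' _ _).1 hν _ ⟨ψ, rfl⟩
    have key : u - ν - φ ∈ pKer (T†) := by
      rw [mem_pKer_adjoint T hd]
      intro ψ
      have e1 := hz1 ⟨ψ, hle _ ψ.2⟩
      have e2 := hν' ⟨ψ, hle _ ψ.2⟩
      have e3 := t1' φ ψ
      have e4 := hS ψ ψ.2 (hle _ ψ.2)
      have e5 := hsym u ψ
      have e6 := hsym ν ψ
      rw [e4, inner_add_right] at e5 e6
      rw [hφ', inner_sub_left, inner_sub_left] at e3
      rw [inner_sub_left, inner_sub_left]
      simp only at e1 e2 e3 e5 e6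
      linear_combination e3 - e5 + e6 + e1 + e2
    have : u = (φ + ν) + (u - ν - φ) := by abel
    rw [this]
    refine Submodule.add_mem_sup (Submodule.add_mem_sup (hge _ φ.2) ?_) key
    exact (mem_pKer_adjoint Tt hdt ν).2 hν'
  · intro u hu ν hν ν' hν' hsum
    rw [mem_pKer_adjoint Tt hdt] at hν
    rw [mem_pKer_adjoint T hd] at hν'
    have hu' := hle _ hu
    have e0 : T ⟨u, hu⟩ + S ν' = 0 := by
      refine hdt.eq_of_inner_left ℂ fun ψ hψ => ?_
      have e1 := t1 ⟨u, hu⟩ ⟨ψ, hψ⟩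
      have e2 := hν ⟨ψ, hψ⟩
      have e3 := hν' ⟨ψ, hge _ hψ⟩
      have e4 := congrArg (fun x => ⟪x, Tt ⟨ψ, hψ⟩⟫) hsum
      simp only [inner_add_left, inner_zero_left] at e1 e4 ⊢
      rw [hsym, hS ψ (hge _ hψ) hψ, inner_add_right]
      linear_combination e1 + e3 + e4 - e2
    have eu : S u + S ν' = Tt ⟨u, hu'⟩ := by
      rw [hS u hu hu', add_right_comm, e0, zero_add]
    have h1 : ν = 0 := by
      apply hzero
      have e1 := congrArg (fun x => ⟪S x, ν⟫) hsum
      simp only [_root_.map_add, _root_.map_zero, inner_zero_left] at e1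
      rw [add_right_comm, eu, inner_add_left] at e1
      have e2 := hν ⟨u, hu'⟩
      rw [← inner_conj_symm, map_eq_zero] at e2
      rwa [e2, zero_add] at e1
    have h2 : ν' = 0 := by
      apply hzero
      have e1 : S ν' = - T ⟨u, hu⟩ := by rw [eq_neg_iff_add_eq_zero, add_comm]; exact e0
      have e2 := hν' ⟨u, hu⟩
      rw [← inner_conj_symm, map_eq_zero] at e2
      rw [e1, inner_neg_left, e2, neg_zero]
    refine ⟨?_, h1, h2⟩
    simpa [h1, h2] using hsum
end
end

section
/- Let (T₀, T̃₀) be a joint pair of closed abstract Friedrichs operators on a complex Hilbert space H, with minimal domain W₀ and graph space W. Then (T₁|_{W₀ + ker T̃₁}, T̃₁|_{W₀ + ker T₁}) is a pair of mutually adjoint bijective realisations relative to (T₀, T̃₀): the two restrictions are adjoint to each other and each is a bijection onto H. -/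
open LinearPMap
open scoped LinearPMap

noncomputable section

variable {H : Type*} [NormedAddCommGroup H] [InnerProductSpace ℂ H] [CompleteSpace H]

local notation "⟪" x ", " y "⟫" => @inner ℂ _ _ x y

/-- Working data: the bounded symmetric coercive extension `S` of `T + Tt`. -/
structure Good (T Tt : H →ₗ.[ℂ] H) (S : H →L[ℂ] H) (μ : ℝ) : Prop where
  dom : T.domain = Tt.domain
  dense : Dense (T.domain : Set H)
  t1 : ∀ (φ : T.domain) (ψ : Tt.domain), ⟪T φ, (ψ : H)⟫ = ⟪(φ : H), Tt ψ⟫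
  sum : ∀ (x : H) (h : x ∈ T.domain) (h' : x ∈ Tt.domain), T ⟨x, h⟩ + Tt ⟨x, h'⟩ = S x
  symm : ∀ x y : H, ⟪S x, y⟫ = ⟪x, S y⟫
  pos : 0 < μ
  coer : ∀ x : H, 2 * μ * ‖x‖ ^ 2 ≤ (⟪S x, x⟫).re
  closed : T.IsClosed

theorem Good.swap {T Tt : H →ₗ.[ℂ] H} {S : H →L[ℂ] H} {μ : ℝ} (g : Good T Tt S μ)
    (h : Tt.IsClosed) : Good Tt T S μ where
  dom := g.dom.symm
  dense := g.dom ▸ g.dense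
  t1 φ ψ := by rw [← inner_conj_symm, ← g.t1, inner_conj_symm]
  sum x h h' := by rw [add_comm, g.sum]
  symm := g.symm
  pos := g.pos
  coer := g.coer
  closed := h

theorem exists_good (T Tt : H →ₗ.[ℂ] H) (hF : IsFriedrichsPair T Tt)
    (hT : T.IsClosed) : ∃ S μ, Good T Tt S μ := by
  obtain ⟨c, hc, h2⟩ := hF.t2
  obtain ⟨μ, hμ, h3⟩ := hF.t3
  have hd : (T + Tt).domain = T.domain := by
    rw [add_domain, ← hF.dom_eq, inf_idem]
  have hdense : Dense ((T + Tt).domain : Set H) := by rw [hd]; exact hF.dense'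
  let f : (T + Tt).domain →L[ℂ] H := (T + Tt).toFun.mkContinuous c h2
  let S : H →L[ℂ] H := f.extend (Submodule.subtypeL (T + Tt).domain)
  have hS : ∀ x : (T + Tt).domain, S (x : H) = (T + Tt) x := fun x =>
    ContinuousLinearMap.extend_eq f hdense.denseRange_val
      isUniformEmbedding_subtype_val.isUniformInducing x
  have hS' : ∀ (x : H) (h : x ∈ T.domain) (h' : x ∈ Tt.domain),
      T ⟨x, h⟩ + Tt ⟨x, h'⟩ = S x := by
    intro x h h'
    exact (hS ⟨x, h, h'⟩).symm
  refine ⟨S, μ, hF.dom_eq, hF.dense', hF.t1, hS', ?_, hμ, ?_, hT⟩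
  · intro x y
    refine hF.dense'.induction (P := fun x => ⟪S x, y⟫ = ⟪x, S y⟫) ?_
      (isClosed_eq (by fun_prop) (by fun_prop)) x
    intro x hx
    refine hF.dense'.induction (P := fun y => ⟪S x, y⟫ = ⟪x, S y⟫) ?_
      (isClosed_eq (by fun_prop) (by fun_prop)) y
    intro y hy
    have hx' : x ∈ Tt.domain := hF.dom_eq ▸ hx
    have hy' : y ∈ Tt.domain := hF.dom_eq ▸ hy
    rw [← hS' x hx hx', ← hS' y hy hy', inner_add_left, inner_add_right]
    have e1 := hF.t1 ⟨x, hx⟩ ⟨y, hy'⟩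
    have e2 := hF.t1 ⟨y, hy⟩ ⟨x, hx'⟩
    have e3 := congrArg (starRingEnd ℂ) e2
    rw [inner_conj_symm, inner_conj_symm] at e3
    simp only at e1 e3
    rw [e1, ← e3, add_comm]
  · intro x
    refine hdense.induction (P := fun x => 2 * μ * ‖x‖ ^ 2 ≤ (⟪S x, x⟫).re) ?_
      (isClosed_le (by fun_prop) (by fun_prop)) x
    intro x hx
    have := h3 ⟨x, hx⟩
    rwa [← hS] at this

namespace Good

variable {T Tt : H →ₗ.[ℂ] H} {S : H →L[ℂ] H} {μ : ℝ}

theorem mem_pKer (g : Good T Tt S μ) (ν : H) :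
    ν ∈ pKer (T†) ↔ ∀ φ : T.domain, ⟪ν, T φ⟫ = 0 := by
  constructor
  · rintro ⟨x, hx, rfl⟩ φ
    have h0 : T† x = 0 := hx
    have := adjoint_isFormalAdjoint g.dense x φ
    rw [h0, inner_zero_left] at this
    exact this.symm
  · intro h
    have hm : ν ∈ (T†).domain := mem_adjoint_domain_of_exists ν ⟨0, fun x => by rw [h, inner_zero_left]⟩
    refine ⟨⟨ν, hm⟩, ?_, rfl⟩
    exact adjoint_apply_eq g.dense ⟨ν, hm⟩ (x₀ := 0) fun x => by simp [h]

theorem pKer_eq (g : Good T Tt S μ) : pKer (T†) = (LinearMap.range T.toFun)ᗮ := by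
  ext ν
  rw [g.mem_pKer, Submodule.mem_orthogonal']
  constructor
  · rintro h _ ⟨φ, rfl⟩
    exact h φ
  · intro h φ
    exact h _ ⟨φ, rfl⟩

theorem bound (g : Good T Tt S μ) (φ : T.domain) : μ * ‖(φ : H)‖ ≤ ‖T φ‖ := by
  have h' : (φ : H) ∈ Tt.domain := g.dom ▸ φ.2
  have h1 := g.coer φ
  rw [← g.sum φ φ.2 h', inner_add_left, Complex.add_re] at h1
  have h2 := congrArg Complex.re (g.t1 φ ⟨φ, h'⟩)
  have h3 : (⟪Tt ⟨φ, h'⟩, (φ : H)⟫).re = (⟪(φ : H), Tt ⟨φ, h'⟩⟫).re := by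
    rw [← inner_conj_symm, Complex.conj_re]
  have h4 : (⟪T φ, (φ : H)⟫).re ≤ ‖T φ‖ * ‖(φ : H)‖ := re_inner_le_norm (𝕜 := ℂ) _ _
  simp only [Subtype.coe_eta] at h1 h2
  rcases (norm_nonneg (φ : H)).eq_or_lt with h0 | h0
  · rw [← h0, mul_zero]; exact norm_nonneg _
  · refine le_of_mul_le_mul_right ?_ h0
    nlinarith

theorem closed_range (g : Good T Tt S μ) :
    IsClosed ((LinearMap.range T.toFun : Submodule ℂ H) : Set H) := by
  have : CompleteSpace T.graph := IsClosed.completeSpace_coe (hs := g.closed)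
  let F : T.graph →L[ℂ] H := (ContinuousLinearMap.snd ℂ H H).comp T.graph.subtypeL
  have hF : AntilipschitzWith (max μ⁻¹ 1).toNNReal F := by
    refine ContinuousLinearMap.antilipschitz_of_bound F ?_
    rintro ⟨⟨x, y⟩, hx⟩
    obtain ⟨φ, h1, h2⟩ := (T.mem_graph_iff).1 hx
    simp only at h1 h2
    subst h1 h2
    have hb := g.bound φ
    have hm : (0 : ℝ) ≤ max μ⁻¹ 1 := le_max_of_le_right zero_le_one
    rw [Real.coe_toNNReal _ hm]
    change max ‖(φ : H)‖ ‖T φ‖ ≤ _ * ‖T φ‖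
    refine max_le ?_ ?_
    · calc ‖(φ : H)‖ ≤ μ⁻¹ * ‖T φ‖ := by rwa [le_inv_mul_iff₀ g.pos]
        _ ≤ _ := by gcongr; exact le_max_left _ _
    · calc ‖T φ‖ = 1 * ‖T φ‖ := (one_mul _).symm
        _ ≤ _ := by gcongr; exact le_max_right _ _
  have := hF.isClosed_range F.uniformContinuous
  convert this using 1
  ext y
  constructor
  · rintro ⟨φ, rfl⟩
    exact ⟨⟨(φ, T φ), T.mem_graph φ⟩, rfl⟩
  · rintro ⟨⟨⟨x, y⟩, hx⟩, rfl⟩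
    obtain ⟨φ, h1, h2⟩ := (T.mem_graph_iff).1 hx
    exact ⟨φ, h2⟩

/-- Values of `Tt†` on `W₀ + ker T†`. -/
theorem value (g : Good T Tt S μ) (u : T.domain) (ν : H) (hν : ν ∈ pKer (T†)) :
    ∃ h : (u : H) + ν ∈ (Tt†).domain, Tt† ⟨u + ν, h⟩ = T u + S ν := by
  have key : ∀ φ : Tt.domain, ⟪T u + S ν, (φ : H)⟫ = ⟪(u : H) + ν, Tt φ⟫ := by
    intro φ
    have hφ : (φ : H) ∈ T.domain := by rw [g.dom]; exact φ.2
    rw [inner_add_left, inner_add_left, g.t1, g.symm, ← g.sum φ hφ φ.2, inner_add_right,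
      (g.mem_pKer ν).1 hν, zero_add]
  have hm := mem_adjoint_domain_of_exists _ ⟨_, key⟩
  exact ⟨hm, adjoint_apply_eq (g.dom ▸ g.dense) ⟨_, hm⟩ key⟩

theorem le_dom (g : Good T Tt S μ) : T.domain ⊔ pKer (T†) ≤ (Tt†).domain := by
  intro x hx
  obtain ⟨u, hu, ν, hν, rfl⟩ := Submodule.mem_sup.1 hx
  exact (g.value ⟨u, hu⟩ ν hν).1

/-- The realisation. -/
def A (T Tt : H →ₗ.[ℂ] H) : H →ₗ.[ℂ] H := (Tt†).domRestrict (T.domain ⊔ pKer (T†))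

theorem A_rep (g : Good T Tt S μ) (x : (A T Tt).domain) :
    ∃ (u : T.domain) (ν : H), ν ∈ pKer (T†) ∧ (x : H) = u + ν ∧ A T Tt x = T u + S ν := by
  obtain ⟨u, hu, ν, hν, hx⟩ := Submodule.mem_sup.1 x.2.1
  obtain ⟨h, e⟩ := g.value ⟨u, hu⟩ ν hν
  exact ⟨⟨u, hu⟩, ν, hν, hx.symm, (domRestrict_apply hx.symm).trans e⟩

theorem A_mk (g : Good T Tt S μ) (u : T.domain) (ν : H) (hν : ν ∈ pKer (T†)) :
    ∃ x : (A T Tt).domain, A T Tt x = T u + S ν := by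
  obtain ⟨h, e⟩ := g.value u ν hν
  exact ⟨⟨u + ν, Submodule.add_mem_sup u.2 hν, h⟩, (domRestrict_apply rfl).trans e⟩

theorem A_bij (g : Good T Tt S μ) : Function.Bijective (fun x : (A T Tt).domain => A T Tt x) := by
  constructor
  · intro x y hxy
    have h0 : A T Tt (x - y) = 0 := by
      rw [LinearPMap.map_sub]; exact sub_eq_zero.2 hxy
    obtain ⟨u, ν, hν, e1, e2⟩ := g.A_rep (x - y)
    rw [h0] at e2
    have h1 : ⟪ν, T u⟫ = 0 := (g.mem_pKer ν).1 hν u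
    have h2 : ⟪ν, S ν⟫ = 0 := by
      have := congrArg (fun z => ⟪ν, z⟫) e2
      simpa [inner_add_right, h1] using this.symm
    have h3 := g.coer ν
    rw [g.symm, h2, Complex.zero_re] at h3
    have hν0 : ν = 0 := by
      by_contra hne
      have : 0 < ‖ν‖ := norm_pos_iff.2 hne
      have := g.pos
      have : 0 < 2 * μ * ‖ν‖ ^ 2 := by positivity
      linarith
    subst hν0
    rw [_root_.map_zero, add_zero] at e2
    have hb := g.bound u
    rw [← e2, norm_zero] at hb
    have hu : (u : H) = 0 := by
      by_contra hne
      have : 0 < ‖(u : H)‖ := norm_pos_iff.2 hne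
      have := mul_pos g.pos this
      linarith
    rw [hu, add_zero] at e1
    exact sub_eq_zero.1 (Subtype.ext e1)
  · intro f
    let R : Submodule ℂ H := LinearMap.range T.toFun
    have hRc : CompleteSpace R := IsClosed.completeSpace_coe (hs := g.closed_range)
    let B : Rᗮ →L[ℂ] Rᗮ := (Rᗮ).orthogonalProjectionOnto.comp (S.comp (Rᗮ).subtypeL)
    have hB : ∀ x y : Rᗮ, ⟪B x, y⟫ = ⟪S x, (y : H)⟫ := fun x y =>
      Submodule.inner_orthogonalProjectionOnto_eq_of_mem_right y (S x)
    have hu : IsUnit B := by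
      have hμ := g.pos
      refine ContinuousLinearMap.isUnit_of_forall_le_norm_inner_map B (c := (2 * μ).toNNReal)
        (Real.toNNReal_pos.2 (by positivity)) ?_
      intro x
      rw [hB]
      have h1 := g.coer x
      have h2 := Complex.re_le_norm (⟪S x, (x : H)⟫)
      rw [Real.coe_toNNReal _ (by positivity)]
      change ‖(x : H)‖ ^ 2 * (2 * μ) ≤ _
      linarith
    obtain ⟨ν, hν⟩ := (ContinuousLinearMap.isUnit_iff_bijective.1 hu).2
      ((Rᗮ).orthogonalProjectionOnto f)
    have hmem : f - S ν ∈ R := by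
      have h1 : f - S ν ∈ Rᗮᗮ := by
        rw [← Submodule.orthogonalProjectionOnto_eq_zero_iff, _root_.map_sub, sub_eq_zero]
        exact hν.symm
      exact R.orthogonal_orthogonal.le h1
    obtain ⟨u, hu⟩ := hmem
    obtain ⟨x, hx⟩ := g.A_mk u ν (by rw [g.pKer_eq]; exact ν.2)
    refine ⟨x, hx.trans ?_⟩
    change T u = _ at hu
    rw [hu, sub_add_cancel]

theorem formal (g : Good T Tt S μ) (g' : Good Tt T S μ) : (A T Tt).IsFormalAdjoint (A Tt T) := by
  intro x y
  obtain ⟨u, ν, hν, e1, e2⟩ := g.A_rep x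
  obtain ⟨v, κ, hκ, f1, f2⟩ := g'.A_rep y
  rw [e1, e2, f1, f2]
  have a1 : ⟪T u, κ⟫ = ⟪(u : H), S κ⟫ := by
    have hu' : (u : H) ∈ Tt.domain := g.dom ▸ u.2
    have h0 : ⟪Tt ⟨u, hu'⟩, κ⟫ = 0 := by
      rw [← inner_conj_symm, (g'.mem_pKer κ).1 hκ, _root_.map_zero]
    rw [← g.symm, ← g.sum u u.2 hu', inner_add_left, h0, add_zero]
  have a2 : ⟪S ν, (v : H)⟫ = ⟪ν, Tt v⟫ := by
    have hv' : (v : H) ∈ T.domain := by rw [g.dom]; exact v.2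
    rw [g.symm, ← g.sum v hv' v.2, inner_add_right, (g.mem_pKer ν).1 hν, zero_add]
  simp only [inner_add_left, inner_add_right, g.t1, a1, a2, g.symm]

theorem A_dense (g : Good T Tt S μ) : Dense ((A T Tt).domain : Set H) := by
  refine g.dense.mono ?_
  intro x hx
  have : x ∈ T.domain ⊔ pKer (T†) := Submodule.mem_sup_left hx
  exact ⟨this, g.le_dom this⟩

theorem A_adj (g : Good T Tt S μ) (g' : Good Tt T S μ) : (A T Tt)† = A Tt T := by
  have hle : A Tt T ≤ (A T Tt)† := (g.formal g').le_adjoint g.A_dense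
  symm
  refine LinearPMap.eq_of_le_of_domain_eq hle (le_antisymm hle.1 ?_)
  intro x hx
  obtain ⟨y, hy⟩ := g'.A_bij.2 ((A T Tt)† ⟨x, hx⟩)
  have key : x - (y : H) = 0 := by
    obtain ⟨z, hz⟩ := g.A_bij.2 (x - y)
    have h1 := adjoint_isFormalAdjoint g.A_dense ⟨x, hx⟩ z
    have h2 := (g.formal g').symm y z
    simp only at hy hz h1
    rw [← hy, h2, hz] at h1
    rw [← inner_self_eq_zero (𝕜 := ℂ), inner_sub_left, ← h1, sub_self]
  rw [sub_eq_zero.1 key]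
  exact y.2

end Good

/-- For a joint pair `(T₀, T̃₀)` of closed abstract Friedrichs operators,
`(T₁|_{W₀ + ker T̃₁}, T̃₁|_{W₀ + ker T₁})` is a pair of mutually adjoint bijective realisations
relative to `(T₀, T̃₀)`. -/
theorem statement10 (T Tt : H →ₗ.[ℂ] H) (hF : IsFriedrichsPair T Tt)
    (hT : T.IsClosed) (hTt : Tt.IsClosed) :
    MABPair T Tt (T.domain ⊔ pKer (T†)) (Tt.domain ⊔ pKer (Tt†)) := by
  obtain ⟨S, μ, g⟩ := exists_good T Tt hF hT
  have g' := g.swap hTt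
  exact ⟨le_sup_left, g.le_dom, le_sup_left, g'.le_dom, g.A_adj g', g'.A_adj g, g.A_bij, g'.A_bij⟩
end
end

section
/- Let (T₀, T̃₀) be a joint pair of closed abstract Friedrichs operators on a complex Hilbert space H, with minimal domain W₀ and graph space W. Then the sum W₀ + ker T₁ + ker T̃₁ is direct and it is a closed subspace of W with respect to the graph norm. In particular, W₀ ∔ ker T₁ and W₀ ∔ ker T̃₁ are both closed in W. -/
open LinearPMap
open scoped LinearPMap

noncomputable section

variable {H : Type*} [NormedAddCommGroup H] [InnerProductSpace ℂ H] [CompleteSpace H]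

local notation "⟪" x ", " y "⟫" => @inner ℂ _ _ x y

theorem adj_graph_iff (T : H →ₗ.[ℂ] H) (hd : Dense (T.domain : Set H)) (u w : H) :
    (u, w) ∈ (T†).graph ↔ ∀ φ : T.domain, ⟪w, (φ : H)⟫ = ⟪u, T φ⟫ := by
  constructor
  · intro h φ
    rw [LinearPMap.mem_graph_iff] at h
    obtain ⟨y, hy, hw⟩ := h
    simp only at hy hw
    rw [← hy, ← hw]
    exact LinearPMap.adjoint_isFormalAdjoint hd y φ
  · intro h
    have hu : u ∈ (T†).domain := LinearPMap.mem_adjoint_domain_of_exists u ⟨w, h⟩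
    rw [LinearPMap.mem_graph_iff]
    exact ⟨⟨u, hu⟩, rfl, LinearPMap.adjoint_apply_eq hd ⟨u, hu⟩ h⟩

theorem mem_pKer_iff (f : H →ₗ.[ℂ] H) (x : H) : x ∈ pKer f ↔ (x, (0 : H)) ∈ f.graph := by
  rw [LinearPMap.mem_graph_iff]
  simp only [pKer, Submodule.mem_map, LinearMap.mem_ker]
  constructor
  · rintro ⟨y, hy, hx⟩
    exact ⟨y, hx, hy⟩
  · rintro ⟨y, hx, hy⟩
    exact ⟨y, hy, hx⟩

theorem pKer_isClosed (f : H →ₗ.[ℂ] H) (hf : f.IsClosed) : IsClosed (pKer f : Set H) := by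
  have : (pKer f : Set H) = (fun x : H => (x, (0 : H))) ⁻¹' (f.graph : Set (H × H)) := by
    ext x
    simp only [SetLike.mem_coe, Set.mem_preimage]
    exact mem_pKer_iff f x
  rw [this]
  exact IsClosed.preimage (by fun_prop) hf

theorem exists_sum_ext (T Tt : H →ₗ.[ℂ] H) (hF : IsFriedrichsPair T Tt) :
    ∃ (S : H →L[ℂ] H) (μ : ℝ), 0 < μ ∧
      (∀ (x : H) (h : x ∈ T.domain) (h' : x ∈ Tt.domain), S x = T ⟨x, h⟩ + Tt ⟨x, h'⟩) ∧
      (∀ x, 2 * μ * ‖x‖ ^ 2 ≤ (⟪S x, x⟫).re) ∧ (∀ x y, ⟪S x, y⟫ = ⟪x, S y⟫) := by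
  obtain ⟨μ, hμ, h3⟩ := hF.t3
  obtain ⟨c, hc, h2⟩ := hF.t2
  have hdom : ∀ x, x ∈ T.domain → x ∈ (T + Tt).domain := fun x hx =>
    ⟨hx, hF.dom_eq ▸ hx⟩
  have hdense : DenseRange ((T + Tt).domain.subtype) := by
    refine hF.dense'.mono ?_
    intro x hx
    exact ⟨⟨x, hdom x hx⟩, rfl⟩
  set S : H →L[ℂ] H := (T + Tt).toFun.extendOfNorm (T + Tt).domain.subtype with hS
  have hSe : ∀ x : (T + Tt).domain, S x = (T + Tt) x := fun x =>
    LinearMap.extendOfNorm_eq hdense ⟨c, h2⟩ x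
  have hSx : ∀ (x : H) (h : x ∈ T.domain) (h' : x ∈ Tt.domain),
      S x = T ⟨x, h⟩ + Tt ⟨x, h'⟩ := fun x h h' => hSe ⟨x, h, h'⟩
  refine ⟨S, μ, hμ, hSx, ?_, ?_⟩
  · intro x
    refine hdense.induction_on (p := fun x => 2 * μ * ‖x‖ ^ 2 ≤ (⟪S x, x⟫).re) x ?_ ?_
    · exact isClosed_le (by fun_prop) (Complex.continuous_re.comp (by fun_prop))
    · intro a
      have := h3 a
      rw [← hSe] at this
      exact this
  · intro x y
    refine hdense.induction_on₂ (p := fun x y => ⟪S x, y⟫ = ⟪x, S y⟫) ?_ ?_ x y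
    · exact isClosed_eq (by fun_prop) (by fun_prop)
    · rintro ⟨a, ha, ha'⟩ ⟨b, hb, hb'⟩
      simp only [Submodule.subtype_apply]
      rw [hSx a ha ha', hSx b hb hb', inner_add_left, inner_add_right,
        hF.t1 ⟨a, ha⟩ ⟨b, hb'⟩]
      have := hF.t1 ⟨b, hb⟩ ⟨a, ha'⟩
      have h' := congrArg (starRingEnd ℂ) this
      rw [inner_conj_symm, inner_conj_symm] at h'
      simp only at h' ⊢
      rw [h', add_comm]

theorem bound_aux (S : H →L[ℂ] H) (μ : ℝ)
    (hS : ∀ x, 2 * μ * ‖x‖ ^ 2 ≤ (⟪S x, x⟫).re) (hs : ∀ x y, ⟪S x, y⟫ = ⟪x, S y⟫)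
    (a t : H) (h : ⟪a, t⟫ = 0) : 2 * μ * ‖a‖ ≤ ‖t + S a‖ := by
  rcases eq_or_ne a 0 with rfl | ha
  · simp
  have hpos : 0 < ‖a‖ := norm_pos_iff.mpr ha
  have h1 := hS a
  have h2 : ⟪S a, a⟫ = ⟪a, t + S a⟫ := by rw [inner_add_right, h, zero_add, hs]
  have h3 : (⟪a, t + S a⟫).re ≤ ‖a‖ * ‖t + S a‖ :=
    (Complex.re_le_norm _).trans (norm_inner_le_norm _ _)
  rw [h2] at h1
  have : ‖a‖ * (2 * μ * ‖a‖) ≤ ‖a‖ * ‖t + S a‖ := by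
    calc _ = 2 * μ * ‖a‖ ^ 2 := by ring
      _ ≤ _ := h1.trans h3
  exact le_of_mul_le_mul_left this hpos

theorem cauchy_aux (μ : ℝ) (hμ : 0 < μ) (a z : ℕ → H) (hz : CauchySeq z)
    (h : ∀ n m, 2 * μ * ‖a n - a m‖ ≤ ‖z n - z m‖) : CauchySeq a := by
  rw [Metric.cauchySeq_iff] at hz ⊢
  intro ε hε
  obtain ⟨N, hN⟩ := hz (2 * μ * ε) (by positivity)
  refine ⟨N, fun m hm n hn => ?_⟩
  have h1 := hN m hm n hn
  rw [dist_eq_norm] at h1 ⊢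
  have h2 := (h m n).trans_lt h1
  exact lt_of_mul_lt_mul_left h2 (by positivity)

/-- The value of the adjoint on a sum of the three pieces. -/
theorem decomp_aux (T Tt : H →ₗ.[ℂ] H) (hF : IsFriedrichsPair T Tt) (S : H →L[ℂ] H)
    (hSx : ∀ (x : H) (h : x ∈ T.domain) (h' : x ∈ Tt.domain), S x = T ⟨x, h⟩ + Tt ⟨x, h'⟩)
    (hs : ∀ x y, ⟪S x, y⟫ = ⟪x, S y⟫) (u : T.domain) (a b w : H)
    (ha : a ∈ pKer (Tt†)) (hb : b ∈ pKer (T†))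
    (hw : ((u : H) + a + b, w) ∈ (Tt†).graph) : w = T u + S b := by
  have hd := hF.dense'
  have hd' : Dense (Tt.domain : Set H) := hF.dom_eq ▸ hd
  have h1 : ((u : H) + a + b, T u + 0 + S b) ∈ (Tt†).graph := by
    refine (Tt†).graph.add_mem (x := ((u : H) + a, T u + 0)) (y := (b, S b))
      ((Tt†).graph.add_mem (x := ((u : H), T u)) (y := (a, 0)) ?_ ((mem_pKer_iff _ _).1 ha)) ?_
    · rw [adj_graph_iff _ hd']
      exact fun φ => hF.t1 u φ
    · rw [adj_graph_iff _ hd']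
      rintro ⟨φ, hφ⟩
      have hφ' : φ ∈ T.domain := hF.dom_eq ▸ hφ
      have hb' := (adj_graph_iff _ hd _ _).1 ((mem_pKer_iff _ _).1 hb) ⟨φ, hφ'⟩
      rw [inner_zero_left] at hb'
      simp only
      rw [hs, hSx φ hφ' hφ, inner_add_right, ← hb', zero_add]
  have := (Tt†).mem_graph_snd_inj hw h1 rfl
  rwa [add_zero] at this

theorem closed_aux (T Tt : H →ₗ.[ℂ] H) (hF : IsFriedrichsPair T Tt) (hT : T.IsClosed)
    (A B : Submodule ℂ H) (hA : A ≤ pKer (Tt†)) (hB : B ≤ pKer (T†))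
    (hAc : IsClosed (A : Set H)) (hBc : IsClosed (B : Set H)) :
    IsClosed {p : H × H | p.1 ∈ (T.domain ⊔ A ⊔ B : Submodule ℂ H) ∧ p ∈ (Tt†).graph} := by
  obtain ⟨S, μ, hμ, hSx, hS, hs⟩ := exists_sum_ext T Tt hF
  have hd := hF.dense'
  have hd' : Dense (Tt.domain : Set H) := hF.dom_eq ▸ hd
  have ha0 : ∀ a ∈ A, ∀ φ : Tt.domain, ⟪a, Tt φ⟫ = 0 := fun a ha φ => by
    rw [← (adj_graph_iff _ hd' _ _).1 ((mem_pKer_iff _ _).1 (hA ha)) φ, inner_zero_left]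
  have hb0 : ∀ b ∈ B, ∀ φ : T.domain, ⟪b, T φ⟫ = 0 := fun b hb φ => by
    rw [← (adj_graph_iff _ hd _ _).1 ((mem_pKer_iff _ _).1 (hB hb)) φ, inner_zero_left]
  apply IsSeqClosed.isClosed
  intro p q hp hq
  have hg : q ∈ (Tt†).graph :=
    (LinearPMap.adjoint_isClosed hd').isSeqClosed (fun n => (hp n).2) hq
  refine ⟨?_, hg⟩
  have hdec : ∀ n, ∃ (u : T.domain) (a b : H), a ∈ A ∧ b ∈ B ∧ (u : H) + a + b = (p n).1 := by
    intro n
    obtain ⟨y, hy, b, hb, h⟩ := Submodule.mem_sup.1 (hp n).1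
    obtain ⟨u, hu, a, ha, h'⟩ := Submodule.mem_sup.1 hy
    exact ⟨⟨u, hu⟩, a, b, ha, hb, by rw [← h, ← h']⟩
  choose u a b ha hb hsum using hdec
  have hw : ∀ n, (p n).2 = T (u n) + S (b n) := fun n => by
    refine decomp_aux T Tt hF S hSx hs (u n) (a n) (b n) _ (hA (ha n)) (hB (hb n)) ?_
    rw [hsum]
    exact (hp n).2
  have hut : ∀ n, (u n : H) ∈ Tt.domain := fun n => hF.dom_eq ▸ (u n).2
  have hw' : ∀ n, S (p n).1 - (p n).2 = Tt ⟨u n, hut n⟩ + S (a n) := fun n => by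
    rw [hw n, ← hsum n, _root_.map_add, _root_.map_add, hSx (u n) (u n).2 (hut n)]
    abel
  have hq1 : Filter.Tendsto (fun n => (p n).1) Filter.atTop (nhds q.1) :=
    (continuous_fst.tendsto q).comp hq
  have hq2 : Filter.Tendsto (fun n => (p n).2) Filter.atTop (nhds q.2) :=
    (continuous_snd.tendsto q).comp hq
  have hca : CauchySeq a := by
    have hz : Filter.Tendsto (fun n => S (p n).1 - (p n).2) Filter.atTop (nhds (S q.1 - q.2)) :=
      ((S.continuous.tendsto q.1).comp hq1).sub hq2
    refine cauchy_aux μ hμ a _ hz.cauchySeq fun n m => ?_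
    have := bound_aux S μ hS hs (a n - a m) (Tt (⟨u n, hut n⟩ - ⟨u m, hut m⟩))
      (ha0 _ (A.sub_mem (ha n) (ha m)) _)
    refine this.trans_eq ?_
    rw [hw', hw', LinearPMap.map_sub, _root_.map_sub]
    congr 1
    abel
  have hcb : CauchySeq b := by
    refine cauchy_aux μ hμ b _ hq2.cauchySeq fun n m => ?_
    have := bound_aux S μ hS hs (b n - b m) (T (u n - u m))
      (hb0 _ (B.sub_mem (hb n) (hb m)) _)
    refine this.trans_eq ?_
    rw [hw, hw, LinearPMap.map_sub, _root_.map_sub]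
    congr 1
    abel
  obtain ⟨a', ha'⟩ := cauchySeq_tendsto_of_complete hca
  obtain ⟨b', hb'⟩ := cauchySeq_tendsto_of_complete hcb
  have hA' : a' ∈ A := hAc.isSeqClosed (fun n => ha n) ha'
  have hB' : b' ∈ B := hBc.isSeqClosed (fun n => hb n) hb'
  have hu1 : Filter.Tendsto (fun n => (u n : H)) Filter.atTop (nhds (q.1 - a' - b')) := by
    refine ((hq1.sub ha').sub hb').congr fun n => ?_
    rw [← hsum n]
    abel
  have hu2 : Filter.Tendsto (fun n => T (u n)) Filter.atTop (nhds (q.2 - S b')) := by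
    refine (hq2.sub ((S.continuous.tendsto b').comp hb')).congr fun n => ?_
    simp only [Function.comp_apply]
    rw [hw n]
    abel
  have hgr : (q.1 - a' - b', q.2 - S b') ∈ T.graph :=
    hT.isSeqClosed (fun n => T.mem_graph (u n)) (hu1.prodMk_nhds hu2)
  have hm : q.1 - a' - b' ∈ T.domain := LinearPMap.mem_domain_iff.2 ⟨_, hgr⟩
  have : q.1 = (q.1 - a' - b') + a' + b' := by abel
  rw [this]
  exact Submodule.add_mem_sup (Submodule.add_mem_sup hm hA') hB'

/-- For a joint pair `(T₀, T̃₀)` of closed abstract Friedrichs operators, the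
sum `W₀ + ker T₁ + ker T̃₁` is direct and closed in the graph space `W` with respect to the
graph norm (equivalently, the graph of the restriction of `T₁` to it is closed); in particular
`W₀ ∔ ker T₁` and `W₀ ∔ ker T̃₁` are closed in `W`. -/
theorem statement11 (T Tt : H →ₗ.[ℂ] H) (hF : IsFriedrichsPair T Tt)
    (hT : T.IsClosed) (hTt : Tt.IsClosed) :
    (∀ u₀ ∈ T.domain, ∀ ν ∈ pKer (Tt†), ∀ ν' ∈ pKer (T†),
      u₀ + ν + ν' = 0 → u₀ = 0 ∧ ν = 0 ∧ ν' = 0) ∧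
    IsClosed {p : H × H | p.1 ∈ (T.domain ⊔ pKer (Tt†) ⊔ pKer (T†) : Submodule ℂ H) ∧
      p ∈ (Tt†).graph} ∧
    IsClosed {p : H × H | p.1 ∈ (T.domain ⊔ pKer (Tt†) : Submodule ℂ H) ∧ p ∈ (Tt†).graph} ∧
    IsClosed {p : H × H | p.1 ∈ (T.domain ⊔ pKer (T†) : Submodule ℂ H) ∧ p ∈ (Tt†).graph} := by
  have hd := hF.dense'
  have hd' : Dense (Tt.domain : Set H) := hF.dom_eq ▸ hd
  have hAc := pKer_isClosed _ (LinearPMap.adjoint_isClosed hd')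
  have hBc := pKer_isClosed _ (LinearPMap.adjoint_isClosed hd)
  have hbot : IsClosed ((⊥ : Submodule ℂ H) : Set H) := by simp
  refine ⟨?_, closed_aux T Tt hF hT _ _ le_rfl le_rfl hAc hBc, ?_, ?_⟩
  · intro u₀ hu a ha b hb h
    obtain ⟨S, μ, hμ, hSx, hS, hs⟩ := exists_sum_ext T Tt hF
    have hut : u₀ ∈ Tt.domain := hF.dom_eq ▸ hu
    have hw : (0 : H) = T ⟨u₀, hu⟩ + S b := by
      refine decomp_aux T Tt hF S hSx hs ⟨u₀, hu⟩ a b 0 ha hb ?_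
      simp only
      rw [h]
      exact (Tt†).graph.zero_mem
    have hw' : (0 : H) = Tt ⟨u₀, hut⟩ + S a := by
      have h1 : S (u₀ + a + b) = 0 := by rw [h, _root_.map_zero]
      rw [_root_.map_add, _root_.map_add, hSx u₀ hu hut] at h1
      rw [← sub_zero (0 : H)]
      nth_rewrite 1 [← h1]
      nth_rewrite 1 [hw]
      abel
    have ha1 := bound_aux S μ hS hs a (Tt ⟨u₀, hut⟩) (by
      rw [← (adj_graph_iff _ hd' _ _).1 ((mem_pKer_iff _ _).1 ha), inner_zero_left])
    have hb1 := bound_aux S μ hS hs b (T ⟨u₀, hu⟩) (by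
      rw [← (adj_graph_iff _ hd _ _).1 ((mem_pKer_iff _ _).1 hb), inner_zero_left])
    rw [← hw', norm_zero] at ha1
    rw [← hw, norm_zero] at hb1
    have ha2 : a = 0 := norm_le_zero_iff.1 (nonpos_of_mul_nonpos_right ha1 (by positivity))
    have hb2 : b = 0 := norm_le_zero_iff.1 (nonpos_of_mul_nonpos_right hb1 (by positivity))
    refine ⟨?_, ha2, hb2⟩
    rwa [ha2, hb2, add_zero, add_zero] at h
  · have := closed_aux T Tt hF hT _ ⊥ le_rfl bot_le hAc hbot
    rwa [sup_bot_eq] at this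
  · have := closed_aux T Tt hF hT ⊥ _ bot_le le_rfl hbot hBc
    rwa [sup_bot_eq] at this
end
end

section
/- Let (T₀, T̃₀) be a joint pair of closed abstract Friedrichs operators on a complex Hilbert space H, with minimal domain W₀ and graph space W. Then the [⊥]-biorthogonal complement of the subspace W₀ + ker T₁ + ker T̃₁ equals W; equivalently, (W₀ + ker T₁ + ker T̃₁)^{[⊥]} = W₀. -/
open LinearPMap
open scoped LinearPMap

noncomputable section

variable {H : Type*} [NormedAddCommGroup H] [InnerProductSpace ℂ H] [CompleteSpace H]

local notation "⟪" x ", " y "⟫" => @inner ℂ _ _ x y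

/-- (T2) and (T3) give a bounded coercive extension of `T + Tt` to `H`. -/
theorem friedrichs_ext (T Tt : H →ₗ.[ℂ] H) (hF : IsFriedrichsPair T Tt) :
    ∃ B : H →L[ℂ] H, (∀ (φ : T.domain) (ψ : Tt.domain), (φ : H) = ψ → B φ = T φ + Tt ψ) ∧
      ∃ m : ℝ, 0 < m ∧ ∀ x : H, 2 * m * ‖x‖ ^ 2 ≤ (⟪B x, x⟫).re := by
  obtain ⟨c, hc, h2⟩ := hF.t2
  obtain ⟨m, hm, h3⟩ := hF.t3
  have hdom : (T + Tt).domain = T.domain := by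
    rw [LinearPMap.add_domain, ← hF.dom_eq, inf_idem]
  have hd : Dense ((T + Tt).domain : Set H) := by rw [hdom]; exact hF.dense'
  let S : (T + Tt).domain →L[ℂ] H := (T + Tt).toFun.mkContinuous c h2
  let B : H →L[ℂ] H := S.extend (Submodule.subtypeL (T + Tt).domain)
  have hB : ∀ φ : (T + Tt).domain, B φ = (T + Tt) φ := fun φ =>
    ContinuousLinearMap.extend_eq S hd.denseRange_val
      isUniformEmbedding_subtype_val.isUniformInducing φ
  refine ⟨B, ?_, m, hm, ?_⟩
  · rintro ⟨φ, hφ⟩ ⟨ψ, hψ⟩ h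
    obtain rfl : φ = ψ := h
    have := hB ⟨φ, hφ, hψ⟩
    rw [LinearPMap.add_apply] at this
    exact this
  · intro x
    refine hd.induction (P := fun x => 2 * m * ‖x‖ ^ 2 ≤ (⟪B x, x⟫).re) ?_ ?_ x
    · intro y hy
      have := h3 ⟨y, hy⟩
      rw [← hB] at this
      exact this
    · exact isClosed_le (by fun_prop) (Complex.continuous_re.comp (by fun_prop))

theorem friedrichs_range_closed (T : H →ₗ.[ℂ] H) (hT : T.IsClosed) (m : ℝ) (hm : 0 < m)
    (hb : ∀ φ : T.domain, m * ‖(φ : H)‖ ≤ ‖T φ‖) :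
    IsClosed ((LinearMap.range T.toFun : Submodule ℂ H) : Set H) := by
  have hg : IsClosed (T.graph : Set (H × H)) := hT
  haveI : CompleteSpace T.graph := hg.completeSpace_coe
  let g : T.graph →L[ℂ] H := (ContinuousLinearMap.snd ℂ H H).comp T.graph.subtypeL
  have hanti : AntilipschitzWith (max 1 (Real.toNNReal m⁻¹)) g := by
    refine g.antilipschitz_of_bound ?_
    rintro ⟨⟨a, b⟩, hab⟩
    obtain ⟨y, hy1, hy2⟩ := (LinearPMap.mem_graph_iff T).1 hab
    dsimp only at hy1 hy2
    subst hy1 hy2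
    have h1 := hb y
    change max ‖(y : H)‖ ‖T y‖ ≤ _ * ‖T y‖
    rw [NNReal.coe_max, Real.coe_toNNReal _ (inv_nonneg.2 hm.le), NNReal.coe_one]
    refine max_le ?_ ?_
    · have h2 : ‖(y : H)‖ ≤ m⁻¹ * ‖T y‖ := by
        rw [inv_mul_eq_div, le_div_iff₀ hm]; linarith
      exact h2.trans (mul_le_mul_of_nonneg_right (le_max_right _ _) (norm_nonneg _))
    · exact le_mul_of_one_le_left (norm_nonneg _) (le_max_left _ _)
  have := hanti.isClosed_range g.uniformContinuous
  convert this using 1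
  ext b
  constructor
  · rintro ⟨y, rfl⟩
    exact ⟨⟨((y : H), T y), T.mem_graph y⟩, rfl⟩
  · rintro ⟨⟨⟨a, b⟩, hab⟩, rfl⟩
    obtain ⟨y, hy1, hy2⟩ := (LinearPMap.mem_graph_iff T).1 hab
    exact ⟨y, hy2⟩

/-- For a joint pair `(T₀, T̃₀)` of closed abstract Friedrichs operators,
`(W₀ + ker T₁ + ker T̃₁)^{[⊥]} = W₀`, and hence the `[⊥]`-biorthogonal complement of
`W₀ + ker T₁ + ker T̃₁` equals the whole graph space `W`. -/
theorem statement13 (T Tt : H →ₗ.[ℂ] H) (hF : IsFriedrichsPair T Tt)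
    (hT : T.IsClosed) (hTt : Tt.IsClosed) :
    bdryPerp (Tt†) (T†) ((T.domain ⊔ pKer (Tt†) ⊔ pKer (T†) : Submodule ℂ H) : Set H)
        = (T.domain : Set H) ∧
    bdryPerp (Tt†) (T†)
        (bdryPerp (Tt†) (T†)
          ((T.domain ⊔ pKer (Tt†) ⊔ pKer (T†) : Submodule ℂ H) : Set H))
        = ((Tt†).domain : Set H) := by
  have hd : Dense (T.domain : Set H) := hF.dense'
  have hdt : Dense (Tt.domain : Set H) := hF.dom_eq ▸ hF.dense'
  have fa := T.adjoint_isFormalAdjoint hd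
  have fat := Tt.adjoint_isFormalAdjoint hdt
  have t1 := hF.t1
  -- `T ⊆ Tt†` and `Tt ⊆ T†`
  have memT : ∀ φ : T.domain, (φ : H) ∈ Tt†.domain := fun φ =>
    LinearPMap.mem_adjoint_domain_of_exists _ ⟨T φ, fun ψ => t1 φ ψ⟩
  have appT : ∀ (φ : T.domain) (y : Tt†.domain), (y : H) = φ → Tt† y = T φ := fun φ y h =>
    LinearPMap.adjoint_apply_eq hdt y (fun ψ => by rw [h]; exact t1 φ ψ)
  have appTt : ∀ (ψ : Tt.domain) (y : T†.domain), (y : H) = ψ → T† y = Tt ψ := fun ψ y h =>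
    LinearPMap.adjoint_apply_eq hd y (fun φ => by
      rw [h, ← inner_conj_symm, ← t1 φ ψ, inner_conj_symm])
  obtain ⟨B, hB, m, hm, hBm⟩ := friedrichs_ext T Tt hF
  -- the operators `Tt†` and `T†` sum to the adjoint of `B`
  have key : ∀ (n : Tt†.domain) (φ : T.domain),
      ⟪B.adjoint n - Tt† n, (φ : H)⟫ = ⟪(n : H), T φ⟫ := by
    intro n φ
    have hφ : (φ : H) ∈ Tt.domain := hF.dom_eq ▸ φ.2
    have h1 := fat n ⟨φ, hφ⟩
    have h2 := hB φ ⟨φ, hφ⟩ rfl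
    dsimp only at h1
    rw [inner_sub_left, ContinuousLinearMap.adjoint_inner_left, h2, h1, inner_add_right]
    ring
  have hW : ∀ n : Tt†.domain, (n : H) ∈ T†.domain := fun n =>
    LinearPMap.mem_adjoint_domain_of_exists _ ⟨_, key n⟩
  have hsum : ∀ (n : Tt†.domain) (w : T†.domain), (w : H) = n → T† w = B.adjoint n - Tt† n :=
    fun n w h => LinearPMap.adjoint_apply_eq hd w (fun φ => by rw [h]; exact key n φ)
  have hbelow : ∀ φ : T.domain, m * ‖(φ : H)‖ ≤ ‖T φ‖ := by
    intro φ
    have hφ : (φ : H) ∈ Tt.domain := hF.dom_eq ▸ φ.2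
    have h1 := hBm φ
    have h2 := t1 φ ⟨φ, hφ⟩
    dsimp only at h2
    rw [hB φ ⟨φ, hφ⟩ rfl, inner_add_left, Complex.add_re] at h1
    have h3 : (⟪Tt ⟨φ, hφ⟩, (φ : H)⟫).re = (⟪T φ, (φ : H)⟫).re := by
      rw [h2, ← inner_conj_symm, Complex.conj_re]
    have h4 : (⟪T φ, (φ : H)⟫).re ≤ ‖T φ‖ * ‖(φ : H)‖ :=
      (Complex.re_le_norm _).trans (norm_inner_le_norm _ _)
    rcases (norm_nonneg (φ : H)).eq_or_lt with h0 | h0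
    · rw [← h0, mul_zero]; exact norm_nonneg _
    · refine le_of_mul_le_mul_right ?_ h0
      nlinarith
  have hcl := friedrichs_range_closed T hT m hm hbelow
  have main : bdryPerp (Tt†) (T†)
      ((T.domain ⊔ pKer (Tt†) ⊔ pKer (T†) : Submodule ℂ H) : Set H) = (T.domain : Set H) := by
    ext x
    constructor
    · rintro ⟨hx, h⟩
      -- `T₁ x` lies in the range of `T`
      have hr : Tt† ⟨x, hx⟩ ∈ LinearMap.range T.toFun := by
        haveI : CompleteSpace (LinearMap.range T.toFun) := hcl.completeSpace_coe
        rw [← (LinearMap.range T.toFun).orthogonal_orthogonal, Submodule.mem_orthogonal]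
        intro v hv
        have hv' : ∀ φ : T.domain, ⟪(0 : H), (φ : H)⟫ = ⟪v, T φ⟫ := fun φ => by
          rw [inner_zero_left]
          exact ((Submodule.mem_orthogonal' _ _).1 hv _ ⟨φ, rfl⟩).symm
        have hvd : v ∈ T†.domain := LinearPMap.mem_adjoint_domain_of_exists _ ⟨0, hv'⟩
        have hv0 : T† ⟨v, hvd⟩ = 0 := LinearPMap.adjoint_apply_eq hd _ hv'
        have hvt : v ∈ Tt†.domain := by
          refine LinearPMap.mem_adjoint_domain_of_exists _ ⟨B.adjoint v, fun ψ => ?_⟩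
          have hψ : (ψ : H) ∈ T.domain := hF.dom_eq.symm ▸ ψ.2
          rw [ContinuousLinearMap.adjoint_inner_left, hB ⟨ψ, hψ⟩ ψ rfl, inner_add_right,
            ← hv', inner_zero_left, zero_add]
        have h5 := h ⟨v, hvt⟩ ⟨v, hvd⟩ rfl
          (Submodule.mem_sup_right ⟨⟨v, hvd⟩, hv0, rfl⟩)
        rw [hv0, inner_zero_right, sub_zero] at h5
        rw [← inner_conj_symm]
        exact (congrArg _ h5).trans (map_zero _)
      obtain ⟨φ, hφ⟩ := hr
      have hφ' : T φ = Tt† ⟨x, hx⟩ := hφ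
      let n : Tt†.domain := ⟨x, hx⟩ - ⟨φ, memT φ⟩
      have hn0 : Tt† n = 0 := by
        rw [LinearPMap.map_sub, appT φ ⟨φ, memT φ⟩ rfl, hφ', sub_self]
      have hnk : (n : H) ∈ pKer (Tt†) := ⟨n, hn0, rfl⟩
      have h6 := h n ⟨n, hW n⟩ rfl (Submodule.mem_sup_left (Submodule.mem_sup_right hnk))
      have h7 := fa ⟨n, hW n⟩ φ
      have hnx : x = φ + (n : H) := by simp [n]
      have h8 : ⟪(φ : H), T† ⟨n, hW n⟩⟫ = ⟪T φ, (n : H)⟫ := by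
        rw [← inner_conj_symm, h7, inner_conj_symm]
      rw [← hφ'] at h6
      have h9 : ⟪(n : H), T† ⟨n, hW n⟩⟫ = 0 := by
        have : ⟪x, T† ⟨n, hW n⟩⟫ = ⟪(φ : H), T† ⟨n, hW n⟩⟫ + ⟪(n : H), T† ⟨n, hW n⟩⟫ := by
          rw [← inner_add_left, ← hnx]
        rw [this, h8] at h6
        linear_combination -h6
      rw [hsum n ⟨n, hW n⟩ rfl, hn0, sub_zero, ContinuousLinearMap.adjoint_inner_right] at h9
      have h10 := hBm n
      rw [h9, Complex.zero_re] at h10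
      have h11 : (n : H) = 0 := by
        by_contra hne
        have : 0 < ‖(n : H)‖ := norm_pos_iff.2 hne
        have : 0 < 2 * m * ‖(n : H)‖ ^ 2 := by positivity
        linarith
      rw [hnx, h11, add_zero]
      exact φ.2
    · intro hx
      refine ⟨memT ⟨x, hx⟩, fun v w hvw _ => ?_⟩
      have h1 := fa w ⟨x, hx⟩
      dsimp only at h1
      rw [appT ⟨x, hx⟩ ⟨x, _⟩ rfl, hvw, ← inner_conj_symm x, h1, inner_conj_symm, sub_self]
  refine ⟨main, ?_⟩
  rw [main]
  ext x
  constructor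
  · rintro ⟨hx, _⟩
    exact hx
  · intro hx
    refine ⟨hx, fun v w hvw hv => ?_⟩
    have hvt : (v : H) ∈ Tt.domain := hF.dom_eq ▸ hv
    have h1 := fat ⟨x, hx⟩ ⟨v, hvt⟩
    dsimp only at h1
    rw [appTt ⟨v, hvt⟩ w hvw.symm, h1, sub_self]
end
end
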